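/- arXiv:1304.0906 — 2 statements merged into one kernel-verified Lean document; each statement's English description precedes it below -/
import Mathlib

section
/- Let K be a field, t ∈ K^×, κ ∈ Z^ℓ a multicharge, e ∈ {0,2,3,4,…}, and suppose (K,t) separates Std(P_n). If i ∈ I^n and 1 ≤ r < n satisfy i_r = i_{r+1}, then T_r f_i = f_i T_r in H_n(K,t,κ), where f_i is the residue idempotent. -/
open scoped BigOperators
open scoped Classical

namespace Paper

/-! ## Quantum integers -/

/-- The quantum integer `[d]_x` in a field, for `d ∈ ℤ`. -/
noncomputable def qint {K : Type*} [Field K] (x : K) (d : ℤ) : K :=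
  if 0 ≤ d then ∑ k ∈ Finset.range d.toNat, x ^ k
  else -∑ k ∈ Finset.range (-d).toNat, x ^ (-((k : ℤ) + 1))

/-- The quantum integer `[d]_t` in a commutative ring, for an invertible `t` and `d ∈ ℤ`. -/
def qintU {O : Type*} [CommRing O] (t : Oˣ) (d : ℤ) : O :=
  if 0 ≤ d then ∑ k ∈ Finset.range d.toNat, (t : O) ^ k
  else -∑ k ∈ Finset.range (-d).toNat, ((t ^ (-((k : ℤ) + 1)) : Oˣ) : O)

/-! ## Nodes, multipartitions and standard tableaux -/

/-- A node `(l, r, c)`: component `l`, row `r`, column `c` (all `0`-based). -/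
abbrev Node : Type := ℕ × ℕ × ℕ

/-- `nodeBelow A B` holds when `B` is strictly below `A`, i.e. `A < B` lexicographically. -/
def nodeBelow (A B : Node) : Prop :=
  A.1 < B.1 ∨ (A.1 = B.1 ∧ (A.2.1 < B.2.1 ∨ (A.2.1 = B.2.1 ∧ A.2.2 < B.2.2)))

/-- An `ℓ`-multipartition of `n`. -/
structure Multipartition (ℓ n : ℕ) : Type where
  part : ℕ → ℕ → ℕ
  comp_bound : ∀ l, ℓ ≤ l → ∀ r, part l r = 0
  antitone : ∀ l, Antitone (part l)
  row_bound : ∀ l r, n ≤ r → part l r = 0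
  size : (∑ l ∈ Finset.range ℓ, ∑ r ∈ Finset.range n, part l r) = n

/-- The diagram of a multipartition. -/
def Multipartition.diagram {ℓ n : ℕ} (μ : Multipartition ℓ n) : Set Node :=
  {A | A.2.2 < μ.part A.1 A.2.1}

/-- A standard tableau: a bijection from the diagram of its shape onto `{1, …, n}`
that increases along rows and down columns of each component (it takes the value
`0` off the diagram, so that it is determined by its entries). -/
structure StdTableau (ℓ n : ℕ) : Type where
  shape : Multipartition ℓ n
  entry : Node → ℕ
  entry_zero : ∀ A, A ∉ shape.diagram → entry A = 0
  bijOn : Set.BijOn entry shape.diagram (Set.Icc 1 n)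
  row_inc : ∀ l r c, (l, r, c + 1) ∈ shape.diagram → entry (l, r, c) < entry (l, r, c + 1)
  col_inc : ∀ l r c, (l, r + 1, c) ∈ shape.diagram → entry (l, r, c) < entry (l, r + 1, c)

/-- The node of a standard tableau containing the entry `k`. -/
noncomputable def StdTableau.node {ℓ n : ℕ} (T : StdTableau ℓ n) (k : ℕ) : Node :=
  Function.invFunOn T.entry T.shape.diagram k

/-- The content `c_k(T) = κ_l + c - r` of the entry `k` in the tableau `T`
(`1 ≤ k ≤ n`). -/
noncomputable def content {ℓ n : ℕ} (κ : ℕ → ℤ) (T : StdTableau ℓ n) (k : ℕ) : ℤ :=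
  κ (T.node k).1 + ((T.node k).2.2 : ℤ) - ((T.node k).2.1 : ℤ)

/-- The residue sequence of a standard tableau, in `I^n` with `I = ℤ/eℤ`. -/
noncomputable def resSeq {ℓ n : ℕ} (e : ℕ) (κ : ℕ → ℤ) (T : StdTableau ℓ n) :
    Fin n → ZMod e :=
  fun k => ((content κ T (k.1 + 1) : ℤ) : ZMod e)

/-- The residue of a node. -/
def resNode (e : ℕ) (κ : ℕ → ℤ) (A : Node) : ZMod e :=
  ((κ A.1 + (A.2.2 : ℤ) - (A.2.1 : ℤ) : ℤ) : ZMod e)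

/-- A set of nodes is the diagram of a multipartition (with at most `ℓ` components)
iff it is finite and downward closed in rows and columns. -/
def IsDiagramSet (ℓ : ℕ) (S : Set Node) : Prop :=
  S.Finite ∧ (∀ A ∈ S, A.1 < ℓ) ∧
    (∀ l r c, (l, r, c + 1) ∈ S → (l, r, c) ∈ S) ∧
    (∀ l r c, (l, r + 1, c) ∈ S → (l, r, c) ∈ S)

/-- `A` is an addable node of the diagram `S`. -/
def Addable (ℓ : ℕ) (S : Set Node) (A : Node) : Prop :=
  A ∉ S ∧ IsDiagramSet ℓ (S ∪ {A})

/-- `A` is a removable node of the diagram `S`. -/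
def Removable (ℓ : ℕ) (S : Set Node) (A : Node) : Prop :=
  A ∈ S ∧ IsDiagramSet ℓ (S \ {A})

/-- `d_A(S)`: the number of addable nodes of `S` of the same residue as `A` strictly
below `A`, minus the number of removable ones. -/
noncomputable def dNode (ℓ e : ℕ) (κ : ℕ → ℤ) (S : Set Node) (A : Node) : ℤ :=
  (Set.ncard {B | Addable ℓ S B ∧ resNode e κ B = resNode e κ A ∧ nodeBelow A B} : ℤ) -
    (Set.ncard {B | Removable ℓ S B ∧ resNode e κ B = resNode e κ A ∧ nodeBelow A B} : ℤ)

/-- The Brundan–Kleshchev–Wang degree `deg_e(T)` of a standard tableau, written as the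
telescoping sum of the recursion `deg_e(T) = deg_e(T↓(n-1)) + d_A(Shape(T))`. -/
noncomputable def degE {ℓ n : ℕ} (e : ℕ) (κ : ℕ → ℤ) (T : StdTableau ℓ n) : ℤ :=
  ∑ m ∈ Finset.Icc 1 n,
    dNode ℓ e κ {A | A ∈ T.shape.diagram ∧ T.entry A ≤ m} (T.node m)

/-- The restriction of the diagram of `T` to entries `≤ m` (the diagram of `Shape(T↓m)`). -/
def restDiag {ℓ n : ℕ} (T : StdTableau ℓ n) (m : ℕ) : Set Node :=
  {A | A ∈ T.shape.diagram ∧ T.entry A ≤ m}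

/-- Dominance order on standard tableaux: `domTab S T` iff `S ⊵ T`. -/
def domTab {ℓ n : ℕ} (S T : StdTableau ℓ n) : Prop :=
  ∀ m l i : ℕ,
    Set.ncard {A | A ∈ restDiag T m ∧ (A.1 < l ∨ (A.1 = l ∧ A.2.1 ≤ i))} ≤
      Set.ncard {A | A ∈ restDiag S m ∧ (A.1 < l ∨ (A.1 = l ∧ A.2.1 ≤ i))}

/-- Interchange the entries `r` and `r + 1` in an entry function. -/
def swapEntry (f : Node → ℕ) (r : ℕ) : Node → ℕ :=
  fun A => if f A = r then r + 1 else if f A = r + 1 then r else f A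

/-- `ρ_r(T) = c_r(T) - c_{r+1}(T)`, the axial distance. -/
noncomputable def rhoTab {ℓ n : ℕ} (κ : ℕ → ℤ) (T : StdTableau ℓ n) (r : ℕ) : ℤ :=
  content κ T r - content κ T (r + 1)

/-- The entry function of the row-reading initial tableau `t^λ`. -/
noncomputable def tlamEntry {ℓ n : ℕ} (μ : Multipartition ℓ n) (A : Node) : ℕ :=
  if A ∈ μ.diagram then
    (∑ l ∈ Finset.range A.1, ∑ r ∈ Finset.range n, μ.part l r) +
      (∑ r ∈ Finset.range A.2.1, μ.part A.1 r) + A.2.2 + 1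
  else 0

/-- The finite set of possible contents of standard tableaux of size `n`. -/
noncomputable def contFinset (ℓ n : ℕ) (κ : ℕ → ℤ) : Finset ℤ :=
  ((Finset.range ℓ ×ˢ Finset.range n ×ˢ Finset.range n).image
      (fun x => κ x.1 + (x.2.2 : ℤ) - (x.2.1 : ℤ))).filter
    (fun c => ∃ T : StdTableau ℓ n, ∃ k, 1 ≤ k ∧ k ≤ n ∧ content κ T k = c)

/-- The standard tableau (if any) obtained from `T` by interchanging the entries
`r` and `r + 1`; i.e. `T·s_r` if it is standard, and `none` otherwise. -/
noncomputable def oSwapO {ℓ n : ℕ} (T : StdTableau ℓ n) (r : ℕ) :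
    Option (StdTableau ℓ n) :=
  if h : ∃ V : StdTableau ℓ n, V.entry = swapEntry T.entry r then some (Classical.choose h)
  else none

/-- `oSwap` extended to `Option`. -/
noncomputable def oSwap {ℓ n : ℕ} (X : Option (StdTableau ℓ n)) (r : ℕ) :
    Option (StdTableau ℓ n) :=
  X.bind fun T => oSwapO T r

/-- Evaluate a seminormal coefficient system on an optional tableau (by `0` if none). -/
noncomputable def aE {ℓ n : ℕ} {K : Type*} [Field K] (α : ℕ → StdTableau ℓ n → K) (r : ℕ)
    (X : Option (StdTableau ℓ n)) : K :=
  X.elim 0 (α r)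

/-! ## Separation and idempotent subrings -/

/-- `(K, t)` separates `Std(P_n)` (field version):
`[n]!_t ∏_{1 ≤ l < m ≤ ℓ} ∏_{-n < d < n} [κ_l - κ_m + d]_t ≠ 0`. -/
def SeparatesF {K : Type*} [Field K] (t : Kˣ) (n ℓ : ℕ) (κ : ℕ → ℤ) : Prop :=
  ((∏ d ∈ Finset.Icc 1 n, qint (t : K) (d : ℤ)) *
      ∏ l ∈ Finset.range ℓ, ∏ m ∈ Finset.Ioo l ℓ,
        ∏ d ∈ Finset.Ioo (-(n : ℤ)) (n : ℤ), qint (t : K) (κ l - κ m + d)) ≠ 0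

/-- `(O, t)` separates `Std(P_n)` (subring version): the separation element is a unit. -/
def SeparatesU {O : Type*} [CommRing O] (t : Oˣ) (n ℓ : ℕ) (κ : ℕ → ℤ) : Prop :=
  IsUnit ((∏ d ∈ Finset.Icc 1 n, qintU t (d : ℤ)) *
      ∏ l ∈ Finset.range ℓ, ∏ m ∈ Finset.Ioo l ℓ,
        ∏ d ∈ Finset.Ioo (-(n : ℤ)) (n : ℤ), qintU t (κ l - κ m + d))

/-- `(O, t)` is an `e`-idempotent subring of the field `K`. -/
def IsIdempotentSubring {K : Type*} [Field K] (O : Subring K) (t : Oˣ) (e n ℓ : ℕ)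
    (κ : ℕ → ℤ) : Prop :=
  SeparatesU t n ℓ κ ∧
    (∀ k : ℤ, ¬(e : ℤ) ∣ k → IsUnit (qintU t k)) ∧
    (∀ k : ℤ, (e : ℤ) ∣ k → qintU t k ∈ Ideal.jacobson (⊥ : Ideal O))

/-! ## The cyclotomic Hecke algebra, by generators and relations -/

/-- Generators `L_1, …, L_n`, `T_1, …, T_{n-1}` (here `0`-based). -/
inductive HeckeGen (n : ℕ) : Type
  | L : Fin n → HeckeGen n
  | T : Fin (n - 1) → HeckeGen n

/-- The position `r` of the pair `(r, r+1)` interchanged by the `r`-th transposition. -/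
def pL {n : ℕ} (r : Fin (n - 1)) : Fin n := ⟨r.1, by have := r.2; omega⟩

/-- The position `r + 1` of the pair interchanged by the `r`-th transposition. -/
def pR {n : ℕ} (r : Fin (n - 1)) : Fin n := ⟨r.1 + 1, by have := r.2; omega⟩

/-- The position `r + 2`, used in braid relations. -/
def pM {n : ℕ} (r : Fin (n - 1)) (hr : r.1 + 1 < n - 1) : Fin n := ⟨r.1 + 2, by omega⟩

/-- The free algebra generator `L_k`. -/
def hL (R : Type*) [CommRing R] {n : ℕ} (k : Fin n) : FreeAlgebra R (HeckeGen n) :=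
  FreeAlgebra.ι R (HeckeGen.L k)

/-- The free algebra generator `T_r`. -/
def hT (R : Type*) [CommRing R] {n : ℕ} (r : Fin (n - 1)) : FreeAlgebra R (HeckeGen n) :=
  FreeAlgebra.ι R (HeckeGen.T r)

/-- The defining relations of the integral cyclotomic Hecke algebra `H_n(R, t, κ)`. -/
inductive HeckeRel (R : Type*) [CommRing R] (t : Rˣ) (n ℓ : ℕ) (κ : ℕ → ℤ) :
    FreeAlgebra R (HeckeGen n) → FreeAlgebra R (HeckeGen n) → Prop
  | cyc (h : 0 < n) :
      HeckeRel R t n ℓ κ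
        (((List.range ℓ).map fun l =>
          hL R (⟨0, h⟩ : Fin n) - algebraMap R _ (qintU t (κ l))).prod) 0
  | quad (r : Fin (n - 1)) :
      HeckeRel R t n ℓ κ ((hT R r + 1) * (hT R r - algebraMap R _ (t : R))) 0
  | LL (k m : Fin n) : HeckeRel R t n ℓ κ (hL R k * hL R m) (hL R m * hL R k)
  | TTfar (r s : Fin (n - 1)) (h : r.1 + 1 < s.1 ∨ s.1 + 1 < r.1) :
      HeckeRel R t n ℓ κ (hT R r * hT R s) (hT R s * hT R r)
  | braid (r s : Fin (n - 1)) (h : s.1 = r.1 + 1) :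
      HeckeRel R t n ℓ κ (hT R r * hT R s * hT R r) (hT R s * hT R r * hT R s)
  | TL (r : Fin (n - 1)) (k : Fin n) (h : k.1 ≠ r.1 ∧ k.1 ≠ r.1 + 1) :
      HeckeRel R t n ℓ κ (hT R r * hL R k) (hL R k * hT R r)
  | LT (r : Fin (n - 1)) :
      HeckeRel R t n ℓ κ (hL R (pR r) * (hT R r - algebraMap R _ (t : R) + 1))
        (hT R r * hL R (pL r) + 1)

/-- The integral cyclotomic Hecke algebra of type `A`, `H_n(R, t, κ)`. -/
noncomputable abbrev CycHecke (R : Type*) [CommRing R] (t : Rˣ) (n ℓ : ℕ) (κ : ℕ → ℤ) :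
    Type _ :=
  RingQuot (HeckeRel R t n ℓ κ)

/-- The generator `L_k` of the cyclotomic Hecke algebra. -/
noncomputable def Lgen (R : Type*) [CommRing R] (t : Rˣ) (n ℓ : ℕ) (κ : ℕ → ℤ)
    (k : Fin n) : CycHecke R t n ℓ κ :=
  RingQuot.mkAlgHom R (HeckeRel R t n ℓ κ) (hL R k)

/-- The generator `T_r` of the cyclotomic Hecke algebra. -/
noncomputable def Tgen (R : Type*) [CommRing R] (t : Rˣ) (n ℓ : ℕ) (κ : ℕ → ℤ)
    (r : Fin (n - 1)) : CycHecke R t n ℓ κ :=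
  RingQuot.mkAlgHom R (HeckeRel R t n ℓ κ) (hT R r)

end Paper
/-! ## Quiver Hecke (KLR) algebras, by generators and relations -/

namespace Paper

/-- Generators `e(i)` (`i ∈ I^n`), `ψ_1, …, ψ_{n-1}`, `y_1, …, y_n` (here `0`-based). -/
inductive KLRGen (n e : ℕ) : Type
  | idem : (Fin n → ZMod e) → KLRGen n e
  | psi : Fin (n - 1) → KLRGen n e
  | y : Fin n → KLRGen n e

/-- The free algebra generator `e(i)`. -/
def kE (R : Type*) [CommRing R] {n e : ℕ} (i : Fin n → ZMod e) :
    FreeAlgebra R (KLRGen n e) :=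
  FreeAlgebra.ι R (KLRGen.idem i)

/-- The free algebra generator `ψ_r`. -/
def kPsi (R : Type*) [CommRing R] {n e : ℕ} (r : Fin (n - 1)) :
    FreeAlgebra R (KLRGen n e) :=
  FreeAlgebra.ι R (KLRGen.psi r)

/-- The free algebra generator `y_k`. -/
def kY (R : Type*) [CommRing R] {n e : ℕ} (k : Fin n) : FreeAlgebra R (KLRGen n e) :=
  FreeAlgebra.ι R (KLRGen.y k)

/-- `s_r · i`: interchange the entries of `i` at positions `r` and `r + 1`. -/
def swapSeq {n e : ℕ} (i : Fin n → ZMod e) (r : Fin (n - 1)) : Fin n → ZMod e :=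
  fun k => if k = pL r then i (pR r) else if k = pR r then i (pL r) else i k

/-- The defining relations of the cyclotomic quiver Hecke algebra `R_n^Λ(R)` where
`Λ = Σ_l Λ_{κ_l mod e}`. -/
inductive KLRRel (R : Type*) [CommRing R] (n e ℓ : ℕ) [NeZero e] (κ : ℕ → ℤ) :
    FreeAlgebra R (KLRGen n e) → FreeAlgebra R (KLRGen n e) → Prop
  | cyc (h : 0 < n) (i : Fin n → ZMod e) :
      KLRRel R n e ℓ κ
        ((kY R (⟨0, h⟩ : Fin n)) ^
            (((Finset.range ℓ).filter fun l => ((κ l : ZMod e) = i ⟨0, h⟩)).card) *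
          kE R i) 0
  | orth (i j : Fin n → ZMod e) (h : i ≠ j) : KLRRel R n e ℓ κ (kE R i * kE R j) 0
  | idem (i : Fin n → ZMod e) : KLRRel R n e ℓ κ (kE R i * kE R i) (kE R i)
  | complete : KLRRel R n e ℓ κ (∑ i : Fin n → ZMod e, kE R i) 1
  | yE (k : Fin n) (i : Fin n → ZMod e) :
      KLRRel R n e ℓ κ (kY R k * kE R i) (kE R i * kY R k)
  | psiE (r : Fin (n - 1)) (i : Fin n → ZMod e) :
      KLRRel R n e ℓ κ (kPsi R r * kE R i) (kE R (swapSeq i r) * kPsi R r)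
  | yy (k m : Fin n) : KLRRel R n e ℓ κ (kY R k * kY R m) (kY R m * kY R k)
  | psiyEq (r : Fin (n - 1)) (i : Fin n → ZMod e) (h : i (pL r) = i (pR r)) :
      KLRRel R n e ℓ κ (kPsi R r * kY R (pR r) * kE R i)
        ((kY R (pL r) * kPsi R r + 1) * kE R i)
  | psiyNe (r : Fin (n - 1)) (i : Fin n → ZMod e) (h : i (pL r) ≠ i (pR r)) :
      KLRRel R n e ℓ κ (kPsi R r * kY R (pR r) * kE R i)
        (kY R (pL r) * kPsi R r * kE R i)
  | ypsiEq (r : Fin (n - 1)) (i : Fin n → ZMod e) (h : i (pL r) = i (pR r)) :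
      KLRRel R n e ℓ κ (kY R (pR r) * kPsi R r * kE R i)
        ((kPsi R r * kY R (pL r) + 1) * kE R i)
  | ypsiNe (r : Fin (n - 1)) (i : Fin n → ZMod e) (h : i (pL r) ≠ i (pR r)) :
      KLRRel R n e ℓ κ (kY R (pR r) * kPsi R r * kE R i)
        (kPsi R r * kY R (pL r) * kE R i)
  | psiyFar (r : Fin (n - 1)) (k : Fin n) (h : k.1 ≠ r.1 ∧ k.1 ≠ r.1 + 1) :
      KLRRel R n e ℓ κ (kPsi R r * kY R k) (kY R k * kPsi R r)
  | psipsiFar (r s : Fin (n - 1)) (h : r.1 + 1 < s.1 ∨ s.1 + 1 < r.1) :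
      KLRRel R n e ℓ κ (kPsi R r * kPsi R s) (kPsi R s * kPsi R r)
  | quadEq (r : Fin (n - 1)) (i : Fin n → ZMod e) (h : i (pL r) = i (pR r)) :
      KLRRel R n e ℓ κ (kPsi R r ^ 2 * kE R i) 0
  | quadR (r : Fin (n - 1)) (i : Fin n → ZMod e)
      (h1 : i (pR r) = i (pL r) + 1) (h2 : i (pL r) ≠ i (pR r) + 1) :
      KLRRel R n e ℓ κ (kPsi R r ^ 2 * kE R i) ((kY R (pL r) - kY R (pR r)) * kE R i)
  | quadL (r : Fin (n - 1)) (i : Fin n → ZMod e)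
      (h1 : i (pL r) = i (pR r) + 1) (h2 : i (pR r) ≠ i (pL r) + 1) :
      KLRRel R n e ℓ κ (kPsi R r ^ 2 * kE R i) ((kY R (pR r) - kY R (pL r)) * kE R i)
  | quadBoth (r : Fin (n - 1)) (i : Fin n → ZMod e)
      (h1 : i (pR r) = i (pL r) + 1) (h2 : i (pL r) = i (pR r) + 1) :
      KLRRel R n e ℓ κ (kPsi R r ^ 2 * kE R i)
        ((kY R (pR r) - kY R (pL r)) * (kY R (pL r) - kY R (pR r)) * kE R i)
  | quadNone (r : Fin (n - 1)) (i : Fin n → ZMod e) (h1 : i (pL r) ≠ i (pR r))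
      (h2 : i (pR r) ≠ i (pL r) + 1) (h3 : i (pL r) ≠ i (pR r) + 1) :
      KLRRel R n e ℓ κ (kPsi R r ^ 2 * kE R i) (kE R i)
  | braidR (r : Fin (n - 1)) (hr : r.1 + 1 < n - 1) (i : Fin n → ZMod e)
      (h0 : i (pM r hr) = i (pL r)) (h1 : i (pR r) = i (pL r) + 1)
      (h2 : i (pL r) ≠ i (pR r) + 1) :
      KLRRel R n e ℓ κ (kPsi R r * kPsi R ⟨r.1 + 1, hr⟩ * kPsi R r * kE R i)
        ((kPsi R ⟨r.1 + 1, hr⟩ * kPsi R r * kPsi R ⟨r.1 + 1, hr⟩ - 1) * kE R i)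
  | braidL (r : Fin (n - 1)) (hr : r.1 + 1 < n - 1) (i : Fin n → ZMod e)
      (h0 : i (pM r hr) = i (pL r)) (h1 : i (pL r) = i (pR r) + 1)
      (h2 : i (pR r) ≠ i (pL r) + 1) :
      KLRRel R n e ℓ κ (kPsi R r * kPsi R ⟨r.1 + 1, hr⟩ * kPsi R r * kE R i)
        ((kPsi R ⟨r.1 + 1, hr⟩ * kPsi R r * kPsi R ⟨r.1 + 1, hr⟩ + 1) * kE R i)
  | braidBoth (r : Fin (n - 1)) (hr : r.1 + 1 < n - 1) (i : Fin n → ZMod e)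
      (h0 : i (pM r hr) = i (pL r)) (h1 : i (pR r) = i (pL r) + 1)
      (h2 : i (pL r) = i (pR r) + 1) :
      KLRRel R n e ℓ κ (kPsi R r * kPsi R ⟨r.1 + 1, hr⟩ * kPsi R r * kE R i)
        ((kPsi R ⟨r.1 + 1, hr⟩ * kPsi R r * kPsi R ⟨r.1 + 1, hr⟩ +
            kY R (pL r) - 2 * kY R (pR r) + kY R (pM r hr)) * kE R i)
  | braidNone (r : Fin (n - 1)) (hr : r.1 + 1 < n - 1) (i : Fin n → ZMod e)
      (h : ¬(i (pM r hr) = i (pL r) ∧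
        (i (pR r) = i (pL r) + 1 ∨ i (pL r) = i (pR r) + 1))) :
      KLRRel R n e ℓ κ (kPsi R r * kPsi R ⟨r.1 + 1, hr⟩ * kPsi R r * kE R i)
        (kPsi R ⟨r.1 + 1, hr⟩ * kPsi R r * kPsi R ⟨r.1 + 1, hr⟩ * kE R i)

/-- The cyclotomic quiver Hecke algebra `R_n^Λ(R)`, `Λ = Σ_l Λ_{κ_l mod e}`. -/
noncomputable abbrev KLR (R : Type*) [CommRing R] (n e ℓ : ℕ) [NeZero e] (κ : ℕ → ℤ) :
    Type _ :=
  RingQuot (KLRRel R n e ℓ κ)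

/-- The generator `e(i)` of the cyclotomic quiver Hecke algebra. -/
noncomputable def KeGen (R : Type*) [CommRing R] (n e ℓ : ℕ) [NeZero e] (κ : ℕ → ℤ)
    (i : Fin n → ZMod e) : KLR R n e ℓ κ :=
  RingQuot.mkAlgHom R (KLRRel R n e ℓ κ) (kE R i)

/-- The generator `ψ_r` of the cyclotomic quiver Hecke algebra. -/
noncomputable def KpsiGen (R : Type*) [CommRing R] (n e ℓ : ℕ) [NeZero e] (κ : ℕ → ℤ)
    (r : Fin (n - 1)) : KLR R n e ℓ κ :=
  RingQuot.mkAlgHom R (KLRRel R n e ℓ κ) (kPsi R r)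

/-- The generator `y_k` of the cyclotomic quiver Hecke algebra. -/
noncomputable def KyGen (R : Type*) [CommRing R] (n e ℓ : ℕ) [NeZero e] (κ : ℕ → ℤ)
    (k : Fin n) : KLR R n e ℓ κ :=
  RingQuot.mkAlgHom R (KLRRel R n e ℓ κ) (kY R k)

end Paper
/-! ## The deformed cyclotomic quiver Hecke algebra -/

namespace Paper

/-- `y_k^⟨d⟩ = t^d y_k + [d]_t` in the free algebra. -/
def ydot (R : Type*) [CommRing R] (t : Rˣ) {n e : ℕ} (d : ℤ) (k : Fin n) :
    FreeAlgebra R (KLRGen n e) :=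
  algebraMap R _ ((t ^ d : Rˣ) : R) * kY R k + algebraMap R _ (qintU t d)

/-- `ρ_r(i) = î_r - î_{r+1}` for `i ∈ I^n`. -/
def rhoI {n e : ℕ} (i : Fin n → ZMod e) (r : Fin (n - 1)) : ℤ :=
  ((i (pL r)).val : ℤ) - ((i (pR r)).val : ℤ)

/-- The defining relations of the deformed cyclotomic quiver Hecke algebra `R_n(O)`. -/
inductive DefKLRRel (R : Type*) [CommRing R] (t : Rˣ) (n e ℓ : ℕ) [NeZero e] (κ : ℕ → ℤ) :
    FreeAlgebra R (KLRGen n e) → FreeAlgebra R (KLRGen n e) → Prop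
  | cyc (h : 0 < n) (i : Fin n → ZMod e) :
      DefKLRRel R t n e ℓ κ
        ((((List.range ℓ).map fun l =>
            if ((κ l : ZMod e) = i ⟨0, h⟩) then
              kY R (⟨0, h⟩ : Fin n) -
                algebraMap R _ (qintU t (κ l - ((i ⟨0, h⟩).val : ℤ)))
            else 1).prod) * kE R i) 0
  | orth (i j : Fin n → ZMod e) (h : i ≠ j) : DefKLRRel R t n e ℓ κ (kE R i * kE R j) 0
  | idem (i : Fin n → ZMod e) : DefKLRRel R t n e ℓ κ (kE R i * kE R i) (kE R i)
  | complete : DefKLRRel R t n e ℓ κ (∑ i : Fin n → ZMod e, kE R i) 1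
  | yE (k : Fin n) (i : Fin n → ZMod e) :
      DefKLRRel R t n e ℓ κ (kY R k * kE R i) (kE R i * kY R k)
  | psiE (r : Fin (n - 1)) (i : Fin n → ZMod e) :
      DefKLRRel R t n e ℓ κ (kPsi R r * kE R i) (kE R (swapSeq i r) * kPsi R r)
  | yy (k m : Fin n) : DefKLRRel R t n e ℓ κ (kY R k * kY R m) (kY R m * kY R k)
  | psiyEq (r : Fin (n - 1)) (i : Fin n → ZMod e) (h : i (pL r) = i (pR r)) :
      DefKLRRel R t n e ℓ κ (kPsi R r * kY R (pR r) * kE R i)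
        ((kY R (pL r) * kPsi R r + 1) * kE R i)
  | psiyNe (r : Fin (n - 1)) (i : Fin n → ZMod e) (h : i (pL r) ≠ i (pR r)) :
      DefKLRRel R t n e ℓ κ (kPsi R r * kY R (pR r) * kE R i)
        (kY R (pL r) * kPsi R r * kE R i)
  | ypsiEq (r : Fin (n - 1)) (i : Fin n → ZMod e) (h : i (pL r) = i (pR r)) :
      DefKLRRel R t n e ℓ κ (kY R (pR r) * kPsi R r * kE R i)
        ((kPsi R r * kY R (pL r) + 1) * kE R i)
  | ypsiNe (r : Fin (n - 1)) (i : Fin n → ZMod e) (h : i (pL r) ≠ i (pR r)) :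
      DefKLRRel R t n e ℓ κ (kY R (pR r) * kPsi R r * kE R i)
        (kPsi R r * kY R (pL r) * kE R i)
  | psiyFar (r : Fin (n - 1)) (k : Fin n) (h : k.1 ≠ r.1 ∧ k.1 ≠ r.1 + 1) :
      DefKLRRel R t n e ℓ κ (kPsi R r * kY R k) (kY R k * kPsi R r)
  | psipsiFar (r s : Fin (n - 1)) (h : r.1 + 1 < s.1 ∨ s.1 + 1 < r.1) :
      DefKLRRel R t n e ℓ κ (kPsi R r * kPsi R s) (kPsi R s * kPsi R r)
  | quadEq (r : Fin (n - 1)) (i : Fin n → ZMod e) (h : i (pL r) = i (pR r)) :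
      DefKLRRel R t n e ℓ κ (kPsi R r ^ 2 * kE R i) 0
  | quadR (r : Fin (n - 1)) (i : Fin n → ZMod e)
      (h1 : i (pR r) = i (pL r) + 1) (h2 : i (pL r) ≠ i (pR r) + 1) :
      DefKLRRel R t n e ℓ κ (kPsi R r ^ 2 * kE R i)
        ((ydot R t (1 + rhoI i r) (pL r) - kY R (pR r)) * kE R i)
  | quadL (r : Fin (n - 1)) (i : Fin n → ZMod e)
      (h1 : i (pL r) = i (pR r) + 1) (h2 : i (pR r) ≠ i (pL r) + 1) :
      DefKLRRel R t n e ℓ κ (kPsi R r ^ 2 * kE R i)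
        ((ydot R t (1 - rhoI i r) (pR r) - kY R (pL r)) * kE R i)
  | quadBoth (r : Fin (n - 1)) (i : Fin n → ZMod e)
      (h1 : i (pR r) = i (pL r) + 1) (h2 : i (pL r) = i (pR r) + 1) :
      DefKLRRel R t n e ℓ κ (kPsi R r ^ 2 * kE R i)
        ((ydot R t (1 + rhoI i r) (pL r) - kY R (pR r)) *
          (ydot R t (1 - rhoI i r) (pR r) - kY R (pL r)) * kE R i)
  | quadNone (r : Fin (n - 1)) (i : Fin n → ZMod e) (h1 : i (pL r) ≠ i (pR r))
      (h2 : i (pR r) ≠ i (pL r) + 1) (h3 : i (pL r) ≠ i (pR r) + 1) :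
      DefKLRRel R t n e ℓ κ (kPsi R r ^ 2 * kE R i) (kE R i)
  | braidBoth (r : Fin (n - 1)) (hr : r.1 + 1 < n - 1) (i : Fin n → ZMod e)
      (h0 : i (pM r hr) = i (pL r)) (h1 : i (pR r) = i (pL r) + 1)
      (h2 : i (pL r) = i (pR r) + 1) :
      DefKLRRel R t n e ℓ κ
        ((kPsi R r * kPsi R ⟨r.1 + 1, hr⟩ * kPsi R r -
            kPsi R ⟨r.1 + 1, hr⟩ * kPsi R r * kPsi R ⟨r.1 + 1, hr⟩) * kE R i)
        ((ydot R t (1 + rhoI i r) (pL r) + ydot R t (1 + rhoI i r) (pM r hr) -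
            ydot R t (1 + rhoI i r) (pR r) - ydot R t (1 - rhoI i r) (pR r)) * kE R i)
  | braidR (r : Fin (n - 1)) (hr : r.1 + 1 < n - 1) (i : Fin n → ZMod e)
      (h0 : i (pM r hr) = i (pL r)) (h1 : i (pR r) = i (pL r) + 1)
      (h2 : i (pL r) ≠ i (pR r) + 1) :
      DefKLRRel R t n e ℓ κ
        ((kPsi R r * kPsi R ⟨r.1 + 1, hr⟩ * kPsi R r -
            kPsi R ⟨r.1 + 1, hr⟩ * kPsi R r * kPsi R ⟨r.1 + 1, hr⟩) * kE R i)
        (algebraMap R _ (-(((t ^ (1 + rhoI i r) : Rˣ) : R))) * kE R i)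
  | braidL (r : Fin (n - 1)) (hr : r.1 + 1 < n - 1) (i : Fin n → ZMod e)
      (h0 : i (pM r hr) = i (pL r)) (h1 : i (pL r) = i (pR r) + 1)
      (h2 : i (pR r) ≠ i (pL r) + 1) :
      DefKLRRel R t n e ℓ κ
        ((kPsi R r * kPsi R ⟨r.1 + 1, hr⟩ * kPsi R r -
            kPsi R ⟨r.1 + 1, hr⟩ * kPsi R r * kPsi R ⟨r.1 + 1, hr⟩) * kE R i)
        (kE R i)
  | braidNone (r : Fin (n - 1)) (hr : r.1 + 1 < n - 1) (i : Fin n → ZMod e)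
      (h : ¬(i (pM r hr) = i (pL r) ∧
        (i (pR r) = i (pL r) + 1 ∨ i (pL r) = i (pR r) + 1))) :
      DefKLRRel R t n e ℓ κ
        ((kPsi R r * kPsi R ⟨r.1 + 1, hr⟩ * kPsi R r -
            kPsi R ⟨r.1 + 1, hr⟩ * kPsi R r * kPsi R ⟨r.1 + 1, hr⟩) * kE R i) 0

/-- The deformed cyclotomic quiver Hecke algebra `R_n(R)`. -/
noncomputable abbrev DefKLR (R : Type*) [CommRing R] (t : Rˣ) (n e ℓ : ℕ) [NeZero e]
    (κ : ℕ → ℤ) : Type _ :=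
  RingQuot (DefKLRRel R t n e ℓ κ)

/-- The generator `f_i` of the deformed cyclotomic quiver Hecke algebra. -/
noncomputable def DfGen (R : Type*) [CommRing R] (t : Rˣ) (n e ℓ : ℕ) [NeZero e]
    (κ : ℕ → ℤ) (i : Fin n → ZMod e) : DefKLR R t n e ℓ κ :=
  RingQuot.mkAlgHom R (DefKLRRel R t n e ℓ κ) (kE R i)

/-- The generator `ψ_r` of the deformed cyclotomic quiver Hecke algebra. -/
noncomputable def DpsiGen (R : Type*) [CommRing R] (t : Rˣ) (n e ℓ : ℕ) [NeZero e]
    (κ : ℕ → ℤ) (r : Fin (n - 1)) : DefKLR R t n e ℓ κ :=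
  RingQuot.mkAlgHom R (DefKLRRel R t n e ℓ κ) (kPsi R r)

/-- The generator `y_k` of the deformed cyclotomic quiver Hecke algebra. -/
noncomputable def DyGen (R : Type*) [CommRing R] (t : Rˣ) (n e ℓ : ℕ) [NeZero e]
    (κ : ℕ → ℤ) (k : Fin n) : DefKLR R t n e ℓ κ :=
  RingQuot.mkAlgHom R (DefKLRRel R t n e ℓ κ) (kY R k)

/-! ## Seminormal idempotents -/

/-- The seminormal idempotent `F_T` of the semisimple cyclotomic Hecke algebra:
`F_T = ∏_{k=1}^n ∏_{c ∈ Cont(n), [c_k(T)] ≠ [c]} (L_k - [c]) / ([c_k(T)] - [c])`. -/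
noncomputable def Fidem (K : Type*) [Field K] (tK : Kˣ) (n ℓ : ℕ) (κ : ℕ → ℤ)
    (T : StdTableau ℓ n) : CycHecke K tK n ℓ κ :=
  ((List.finRange n).map (fun k =>
    (((contFinset ℓ n κ).sort (· ≤ ·)).map (fun c =>
      if qint (tK : K) (content κ T (k.1 + 1)) ≠ qint (tK : K) c then
        (Lgen K tK n ℓ κ k - algebraMap K _ (qint (tK : K) c)) *
          algebraMap K _ ((qint (tK : K) (content κ T (k.1 + 1)) - qint (tK : K) c)⁻¹)
      else 1)).prod)).prod

/-- The residue idempotent `f_i = Σ_{T ∈ Std(i)} F_T`. -/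
noncomputable def fres (K : Type*) [Field K] (tK : Kˣ) (n ℓ e : ℕ) (κ : ℕ → ℤ)
    (i : Fin n → ZMod e) : CycHecke K tK n ℓ κ :=
  ∑ᶠ T : {T : StdTableau ℓ n // resSeq e κ T = i}, Fidem K tK n ℓ κ T.1

/-- The simultaneous two-sided eigenspace `H_{S,T}` of the Jucys–Murphy elements. -/
noncomputable def eigSub (K : Type*) [Field K] (tK : Kˣ) (n ℓ : ℕ) (κ : ℕ → ℤ)
    (S T : StdTableau ℓ n) : Submodule K (CycHecke K tK n ℓ κ) where
  carrier := {h | ∀ k : Fin n,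
      Lgen K tK n ℓ κ k * h = qint (tK : K) (content κ S (k.1 + 1)) • h ∧
      h * Lgen K tK n ℓ κ k = qint (tK : K) (content κ T (k.1 + 1)) • h}
  add_mem' := by
    intro a b ha hb
    intro k
    obtain ⟨h1, h2⟩ := ha k
    obtain ⟨h3, h4⟩ := hb k
    exact ⟨by rw [mul_add, h1, h3, smul_add], by rw [add_mul, h2, h4, smul_add]⟩
  zero_mem' := by intro k; simp
  smul_mem' := by
    intro c a ha
    intro k
    obtain ⟨h1, h2⟩ := ha k
    constructor
    · rw [mul_smul_comm, h1, smul_comm]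
    · rw [smul_mul_assoc, h2, smul_comm]

end Paper

namespace Paper

/-!
The residue idempotent `f_i` is a polynomial in the commuting elements `L_1, …, L_n`. If
`i_r = i_{r+1}`, then in a standard tableau of residue sequence `i` the entries `r` and `r + 1` are
never adjacent, because horizontally and vertically adjacent nodes have residues that differ by `1`.
Interchanging `r` and `r + 1` is therefore an involution of `Std(i)`, and the polynomial of `f_i` is
symmetric in its `r`-th and `(r+1)`-st variables.

On the other hand, Bernstein's relation `T_r P = (s_r P) T_r + ∂_r(P)` holds for every polynomial
`P` in the `L_k`, where `(L_{r+1} - L_r) ∂_r(P) = (P - s_r P) ((t - 1) L_{r+1} + 1)`, and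
`∂_r(P) = 0` for symmetric `P`.
-/

section Tableaux

variable {ℓ n e : ℕ}

theorem swapEntry_eq_swap_comp (f : Node → ℕ) (s : ℕ) :
    swapEntry f s = Equiv.swap s (s + 1) ∘ f := by
  funext A
  simp only [swapEntry, Function.comp_apply, Equiv.swap_apply_def]

theorem swapEntry_swapEntry (f : Node → ℕ) (s : ℕ) : swapEntry (swapEntry f s) s = f := by
  funext A
  simp only [swapEntry_eq_swap_comp, Function.comp_apply, Equiv.swap_apply_self]

theorem swapEntry_lt_swapEntry {f : Node → ℕ} {s : ℕ} {A B : Node} (hlt : f A < f B)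
    (hne : f A = s → f B ≠ s + 1) : swapEntry f s A < swapEntry f s B := by
  unfold swapEntry
  split_ifs <;> omega

theorem pL_ne_pR (r : Fin (n - 1)) : pL r ≠ pR r := by
  simp [pL, pR, Fin.ext_iff]

theorem Multipartition.diagram_injective :
    Function.Injective (Multipartition.diagram : Multipartition ℓ n → Set Node) := by
  intro μ ν h
  have hpart : μ.part = ν.part := by
    funext l a
    refine eq_of_forall_lt_iff fun c => ?_
    exact Set.ext_iff.1 h (l, a, c)
  cases μ
  cases ν
  congr

theorem Multipartition.part_le (μ : Multipartition ℓ n) (l a : ℕ) : μ.part l a ≤ n := by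
  rcases le_or_gt ℓ l with hl | hl
  · simp [μ.comp_bound l hl]
  rcases le_or_gt n a with ha | ha
  · simp [μ.row_bound l a ha]
  calc μ.part l a
      ≤ ∑ a ∈ Finset.range n, μ.part l a :=
        Finset.single_le_sum_of_canonicallyOrdered (f := μ.part l) (Finset.mem_range.2 ha)
    _ ≤ ∑ l ∈ Finset.range ℓ, ∑ a ∈ Finset.range n, μ.part l a :=
        Finset.single_le_sum_of_canonicallyOrdered
          (f := fun l => ∑ a ∈ Finset.range n, μ.part l a) (Finset.mem_range.2 hl)
    _ = n := μ.size

theorem Multipartition.lt_of_mem_diagram (μ : Multipartition ℓ n) {A : Node}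
    (hA : A ∈ μ.diagram) : A.1 < ℓ ∧ A.2.1 < n ∧ A.2.2 < n := by
  have hpos : A.2.2 < μ.part A.1 A.2.1 := hA
  refine ⟨?_, ?_, hpos.trans_le (μ.part_le _ _)⟩
  · by_contra! hl
    simp [μ.comp_bound _ hl] at hpos
  · by_contra! ha
    simp [μ.row_bound _ _ ha] at hpos

namespace StdTableau

theorem mem_diagram_iff (T : StdTableau ℓ n) (A : Node) :
    A ∈ T.shape.diagram ↔ T.entry A ≠ 0 :=
  ⟨fun hA => Nat.one_le_iff_ne_zero.1 (T.bijOn.mapsTo hA).1, not_imp_comm.1 (T.entry_zero A)⟩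

theorem entry_le (T : StdTableau ℓ n) (A : Node) : T.entry A ≤ n := by
  by_cases hA : A ∈ T.shape.diagram
  · exact (T.bijOn.mapsTo hA).2
  · simp [T.entry_zero A hA]

theorem entry_injective :
    Function.Injective (StdTableau.entry : StdTableau ℓ n → Node → ℕ) := by
  intro S T h
  have hshape : S.shape = T.shape := Multipartition.diagram_injective <| by
    ext A
    rw [S.mem_diagram_iff, T.mem_diagram_iff, h]
  cases S
  cases T
  congr

instance : Finite (StdTableau ℓ n) := by
  refine Finite.of_injective
    (fun (T : StdTableau ℓ n) (x : Fin ℓ × Fin n × Fin n) =>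
      (⟨T.entry (x.1, x.2.1, x.2.2), Nat.lt_succ_of_le (T.entry_le _)⟩ : Fin (n + 1)))
    fun S T hST => entry_injective (funext fun A => ?_)
  by_cases hA : A.1 < ℓ ∧ A.2.1 < n ∧ A.2.2 < n
  · exact congrArg Fin.val (congrFun hST (⟨A.1, hA.1⟩, ⟨A.2.1, hA.2.1⟩, ⟨A.2.2, hA.2.2⟩))
  · rw [S.entry_zero A (mt S.shape.lt_of_mem_diagram hA),
      T.entry_zero A (mt T.shape.lt_of_mem_diagram hA)]

theorem exists_entry_eq (T : StdTableau ℓ n) (k : Fin n) : ∃ A, T.entry A = k.1 + 1 := by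
  obtain ⟨A, -, hA⟩ := T.bijOn.surjOn (show k.1 + 1 ∈ Set.Icc 1 n from ⟨by omega, k.2⟩)
  exact ⟨A, hA⟩

theorem node_eq_of_entry_eq (T : StdTableau ℓ n) {A : Node} {k : ℕ} (hA : T.entry A = k + 1) :
    T.node (k + 1) = A := by
  have hmem : A ∈ T.shape.diagram := (T.mem_diagram_iff A).2 (by omega)
  rw [← hA]
  exact T.bijOn.injOn.leftInvOn_invFunOn hmem

theorem resSeq_eq_resNode (κ : ℕ → ℤ) (T : StdTableau ℓ n) {A : Node} {k : Fin n}
    (hA : T.entry A = k.1 + 1) : resSeq e κ T k = resNode e κ A := by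
  rw [resSeq, content, T.node_eq_of_entry_eq hA, resNode]

/-- The entries `r` and `r + 1` (in the paper's `1`-based numbering) do not occupy horizontally or
vertically adjacent nodes of `T`, so that they can be interchanged. -/
def IsSwappable (T : StdTableau ℓ n) (r : Fin (n - 1)) : Prop :=
  ∀ l a c, T.entry (l, a, c) = r.1 + 1 →
    T.entry (l, a, c + 1) ≠ r.1 + 2 ∧ T.entry (l, a + 1, c) ≠ r.1 + 2

/-- The standard tableau `T · s_r`, obtained by interchanging the entries `r` and `r + 1` (in the
paper's `1`-based numbering) of `T`. -/
def swap (T : StdTableau ℓ n) (r : Fin (n - 1)) (hT : T.IsSwappable r) : StdTableau ℓ n where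
  shape := T.shape
  entry := swapEntry T.entry (r.1 + 1)
  entry_zero A hA := by simp [swapEntry, T.entry_zero A hA]
  bijOn := by
    have hr : r.1 + 1 ∈ Set.Icc 1 n ↔ r.1 + 1 + 1 ∈ Set.Icc 1 n := by
      have := r.2
      simp only [Set.mem_Icc]
      omega
    rw [swapEntry_eq_swap_comp]
    exact (Equiv.swap_bijOn_self hr).comp T.bijOn
  row_inc l a c hA := swapEntry_lt_swapEntry (T.row_inc l a c hA) fun h => (hT l a c h).1
  col_inc l a c hA := swapEntry_lt_swapEntry (T.col_inc l a c hA) fun h => (hT l a c h).2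

theorem node_swap (T : StdTableau ℓ n) {r : Fin (n - 1)} (hT : T.IsSwappable r) (k : Fin n) :
    (T.swap r hT).node (k.1 + 1) = T.node ((Equiv.swap (pL r) (pR r) k).1 + 1) := by
  obtain ⟨A, hA⟩ := T.exists_entry_eq (Equiv.swap (pL r) (pR r) k)
  have hsucc : Function.Injective fun k : Fin n => k.1 + 1 :=
    (add_left_injective 1).comp Fin.val_injective
  have hswap : (T.swap r hT).entry A = k.1 + 1 := by
    change swapEntry T.entry (r.1 + 1) A = k.1 + 1
    rw [swapEntry_eq_swap_comp, Function.comp_apply, hA, hsucc.map_swap]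
    exact Equiv.swap_apply_self _ _ _
  rw [node_eq_of_entry_eq _ hswap, node_eq_of_entry_eq _ hA]

theorem content_swap (κ : ℕ → ℤ) (T : StdTableau ℓ n) {r : Fin (n - 1)} (hT : T.IsSwappable r)
    (k : Fin n) :
    content κ (T.swap r hT) (k.1 + 1) =
      content κ T ((Equiv.swap (pL r) (pR r) k).1 + 1) := by
  simp only [content, T.node_swap hT]

theorem resSeq_swap (κ : ℕ → ℤ) (T : StdTableau ℓ n) {r : Fin (n - 1)} (hT : T.IsSwappable r) :
    resSeq e κ (T.swap r hT) = resSeq e κ T ∘ Equiv.swap (pL r) (pR r) := by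
  funext k
  simp only [resSeq, T.content_swap κ hT, Function.comp_apply]

theorem isSwappable_of_resSeq_eq (he : e ≠ 1) (κ : ℕ → ℤ) (T : StdTableau ℓ n)
    {r : Fin (n - 1)} (h : resSeq e κ T (pL r) = resSeq e κ T (pR r)) : T.IsSwappable r := by
  have : Nontrivial (ZMod e) := ZMod.nontrivial_iff.2 he
  intro l a c hleft
  rw [T.resSeq_eq_resNode κ (k := pL r) hleft] at h
  constructor
  · intro hright
    rw [T.resSeq_eq_resNode κ (k := pR r) hright] at h
    have hrow : resNode e κ (l, a, c + 1) = resNode e κ (l, a, c) + 1 := by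
      simp only [resNode]
      push_cast
      ring
    rw [hrow] at h
    exact one_ne_zero (left_eq_add.1 h)
  · intro hbelow
    rw [T.resSeq_eq_resNode κ (k := pR r) hbelow] at h
    have hcol : resNode e κ (l, a, c) = resNode e κ (l, a + 1, c) + 1 := by
      simp only [resNode]
      push_cast
      ring
    rw [hcol] at h
    exact one_ne_zero (add_eq_left.1 h)

end StdTableau

/-- The set `Std(i)` of standard tableaux with residue sequence `i`. -/
abbrev StdRes (ℓ : ℕ) (κ : ℕ → ℤ) (i : Fin n → ZMod e) : Type :=
  {T : StdTableau ℓ n // resSeq e κ T = i}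

namespace StdRes

variable {κ : ℕ → ℤ} {i : Fin n → ZMod e} {r : Fin (n - 1)}

theorem isSwappable (he : e ≠ 1) (h : i (pL r) = i (pR r)) (T : StdRes ℓ κ i) :
    T.1.IsSwappable r :=
  T.1.isSwappable_of_resSeq_eq he κ (by rw [T.2, h])

/-- The action `T ↦ T · s_r` on `Std(i)` when `i_r = i_{r+1}`. -/
def swap (he : e ≠ 1) (h : i (pL r) = i (pR r)) (T : StdRes ℓ κ i) : StdRes ℓ κ i :=
  ⟨T.1.swap r (T.isSwappable he h), by
    rw [T.1.resSeq_swap, T.2, Equiv.comp_swap_eq_update, h, Function.update_eq_self, ← h,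
      Function.update_eq_self]⟩

theorem swap_involutive (he : e ≠ 1) (h : i (pL r) = i (pR r)) :
    Function.Involutive (swap he h : StdRes ℓ κ i → StdRes ℓ κ i) := fun T =>
  Subtype.ext (StdTableau.entry_injective (swapEntry_swapEntry T.1.entry (r.1 + 1)))

end StdRes

end Tableaux

section LagrangeProducts

variable {K A B : Type*} [Field K] [Ring A] [Algebra K A] [Ring B] [Algebra K B]

/-- The Lagrange interpolation factor `∏_{c ∈ C, q d ≠ q c} (x - q c) / (q d - q c)`, with the
factors taken in increasing order of `c` as in the definition of `F_T`. -/
noncomputable def lagrangeFactor (q : ℤ → K) (C : Finset ℤ) (x : A) (d : ℤ) : A :=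
  ((C.sort (· ≤ ·)).map fun c =>
    if q d ≠ q c then (x - algebraMap K A (q c)) * algebraMap K A (q d - q c)⁻¹ else 1).prod

/-- The product `∏_k ∏_{c ∈ C, q (d k) ≠ q c} (x k - q c) / (q (d k) - q c)`, which is `F_T` when
`x k = L_k`, `q c = [c]_t`, `C` is the set of contents and `d k = c_k(T)`. -/
noncomputable def lagrangeProd {n : ℕ} (q : ℤ → K) (C : Finset ℤ) (x : Fin n → A)
    (d : Fin n → ℤ) : A :=
  ((List.finRange n).map fun k => lagrangeFactor q C (x k) (d k)).prod

theorem map_lagrangeFactor (f : A →ₐ[K] B) (q : ℤ → K) (C : Finset ℤ) (x : A) (d : ℤ) :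
    f (lagrangeFactor q C x d) = lagrangeFactor q C (f x) d := by
  simp only [lagrangeFactor, map_list_prod, List.map_map, Function.comp_def, apply_ite f, map_mul,
    map_sub, map_one, AlgHom.commutes]

theorem map_lagrangeProd {n : ℕ} (f : A →ₐ[K] B) (q : ℤ → K) (C : Finset ℤ) (x : Fin n → A)
    (d : Fin n → ℤ) : f (lagrangeProd q C x d) = lagrangeProd q C (f ∘ x) d := by
  simp only [lagrangeProd, map_list_prod, List.map_map, Function.comp_def, map_lagrangeFactor]

theorem lagrangeProd_comp_perm {A : Type*} [CommRing A] [Algebra K A] {n : ℕ} (q : ℤ → K)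
    (C : Finset ℤ) (x : Fin n → A) (d : Fin n → ℤ) (σ : Equiv.Perm (Fin n)) :
    lagrangeProd q C (x ∘ σ) (d ∘ σ) = lagrangeProd q C x d := by
  simp only [lagrangeProd, ← Fin.prod_univ_def]
  exact Equiv.prod_comp σ fun k => lagrangeFactor q C (x k) (d k)

end LagrangeProducts

section DividedDifferences

open MvPolynomial

section Evaluation

variable {R A ι : Type*} [CommSemiring R] [Semiring A] [Algebra R A]

open scoped IsMulCommutative in
/-- The evaluation of polynomials at a family of pairwise commuting elements of an algebra which
need not itself be commutative. -/
noncomputable def aevalOfCommute (x : ι → A) (hx : ∀ j k, Commute (x j) (x k)) :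
    MvPolynomial ι R →ₐ[R] A :=
  haveI : IsMulCommutative (Algebra.adjoin R (Set.range x)) :=
    Algebra.isMulCommutative_adjoin R (by
      rintro _ ⟨j, rfl⟩ _ ⟨k, rfl⟩
      exact hx j k)
  (Algebra.adjoin R (Set.range x)).val.comp
    (aeval fun k => ⟨x k, Algebra.subset_adjoin ⟨k, rfl⟩⟩)

@[simp]
theorem aevalOfCommute_X (x : ι → A) (hx : ∀ j k, Commute (x j) (x k)) (k : ι) :
    aevalOfCommute (R := R) x hx (X k) = x k := by
  simp [aevalOfCommute]

end Evaluation

variable {R A ι : Type*} [CommRing R] [Ring A] [Algebra R A] [DecidableEq ι]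

/-- `Q` is the divided difference `∂ P = g (P - s P) / (X_b - X_a)`, with `s` the transposition of
the variables `X_a` and `X_b`, and it is the error term in moving `T` past the value of `P`
under `φ`. -/
structure IsDividedDifference (φ : MvPolynomial ι R →ₐ[R] A) (T : A) (a b : ι)
    (g P Q : MvPolynomial ι R) : Prop where
  mul_map : T * φ P = φ (rename (Equiv.swap a b) P) * T + φ Q
  sub_mul : (X b - X a) * Q = (P - rename (Equiv.swap a b) P) * g

namespace IsDividedDifference

variable {φ : MvPolynomial ι R →ₐ[R] A} {T : A} {a b : ι} {g P P' Q Q' : MvPolynomial ι R}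

theorem add (h : IsDividedDifference φ T a b g P Q) (h' : IsDividedDifference φ T a b g P' Q') :
    IsDividedDifference φ T a b g (P + P') (Q + Q') where
  mul_map := by
    simp only [map_add, mul_add, add_mul, h.mul_map, h'.mul_map]
    abel
  sub_mul := by
    rw [map_add]
    linear_combination h.sub_mul + h'.sub_mul

theorem mul (h : IsDividedDifference φ T a b g P Q) (h' : IsDividedDifference φ T a b g P' Q') :
    IsDividedDifference φ T a b g (P * P') (rename (Equiv.swap a b) P * Q' + Q * P') where
  mul_map := by
    rw [map_mul, ← mul_assoc, h.mul_map, add_mul, mul_assoc, h'.mul_map]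
    simp only [map_mul, map_add, mul_add, mul_assoc, add_assoc]
  sub_mul := by
    rw [map_mul]
    linear_combination rename (Equiv.swap a b) P * h'.sub_mul + P' * h.sub_mul

theorem of_commute (hT : Commute T (φ P)) (hP : rename (Equiv.swap a b) P = P) :
    IsDividedDifference φ T a b g P 0 where
  mul_map := by rw [hP, map_zero, add_zero, hT.eq]
  sub_mul := by rw [hP, sub_self, zero_mul, mul_zero]

theorem X_left (h : T * φ (X a) = φ (X b) * T - φ g) :
    IsDividedDifference φ T a b g (X a) (-g) where
  mul_map := by rw [rename_X, Equiv.swap_apply_left, h, map_neg, sub_eq_add_neg]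
  sub_mul := by
    rw [rename_X, Equiv.swap_apply_left]
    ring

theorem X_right (h : T * φ (X b) = φ (X a) * T + φ g) :
    IsDividedDifference φ T a b g (X b) g where
  mul_map := by rw [rename_X, Equiv.swap_apply_right, h]
  sub_mul := by rw [rename_X, Equiv.swap_apply_right]

theorem exists_of_X (hleft : T * φ (X a) = φ (X b) * T - φ g)
    (hright : T * φ (X b) = φ (X a) * T + φ g)
    (hcomm : ∀ k, k ≠ a → k ≠ b → Commute T (φ (X k))) (P : MvPolynomial ι R) :
    ∃ Q, IsDividedDifference φ T a b g P Q := by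
  have hX : ∀ k, ∃ Q, IsDividedDifference φ T a b g (X k) Q := by
    intro k
    rcases eq_or_ne k a with rfl | ha
    · exact ⟨_, X_left hleft⟩
    rcases eq_or_ne k b with rfl | hb
    · exact ⟨_, X_right hright⟩
    · exact ⟨_, of_commute (hcomm k ha hb)
        (by rw [rename_X, Equiv.swap_apply_of_ne_of_ne ha hb])⟩
  induction P using MvPolynomial.induction_on with
  | C c =>
    refine ⟨0, of_commute ?_ (rename_C _ c)⟩
    rw [← algebraMap_eq, AlgHom.commutes]
    exact (Algebra.commutes c T).symm
  | add P P' hP hP' =>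
    obtain ⟨Q, hQ⟩ := hP
    obtain ⟨Q', hQ'⟩ := hP'
    exact ⟨_, hQ.add hQ'⟩
  | mul_X P k hP =>
    obtain ⟨Q, hQ⟩ := hP
    obtain ⟨Q', hQ'⟩ := hX k
    exact ⟨_, hQ.mul hQ'⟩

theorem eq_zero_of_rename_eq [IsDomain R] (hab : a ≠ b)
    (h : IsDividedDifference φ T a b g P Q) (hP : rename (Equiv.swap a b) P = P) : Q = 0 := by
  have hne : (X b - X a : MvPolynomial ι R) ≠ 0 := sub_ne_zero.2 fun hX => hab (X_injective hX).symm
  have hmul := h.sub_mul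
  rw [hP, sub_self, zero_mul] at hmul
  exact (mul_eq_zero.1 hmul).resolve_left hne

theorem commute_of_rename_eq [IsDomain R] (hab : a ≠ b)
    (h : IsDividedDifference φ T a b g P Q) (hP : rename (Equiv.swap a b) P = P) :
    Commute T (φ P) := by
  have hmul := h.mul_map
  rwa [h.eq_zero_of_rename_eq hab hP, hP, map_zero, add_zero] at hmul

end IsDividedDifference

end DividedDifferences

theorem mul_eq_mul_add_one_of_mul_eq_mul_add_one {A : Type*} [Semiring A] {T U L M : A}
    (hU : IsUnit U) (hTU : Commute T U) (hL : Commute (T * U) L) (h : M * U = T * L + 1) :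
    U * M = L * T + 1 :=
  hU.mul_right_cancel <|
    calc U * M * U = U * (T * L + 1) := by rw [mul_assoc, h]
      _ = T * U * L + U := by rw [mul_add, mul_one, ← mul_assoc, hTU.eq]
      _ = (L * T + 1) * U := by rw [hL.eq, add_mul, one_mul, mul_assoc]

section HeckeRelations

variable (R : Type*) [CommRing R] (t : Rˣ) (n ℓ : ℕ) (κ : ℕ → ℤ)

theorem commute_Lgen (j k : Fin n) : Commute (Lgen R t n ℓ κ j) (Lgen R t n ℓ κ k) := by
  simpa only [map_mul, Lgen, Commute, SemiconjBy] using
    RingQuot.mkAlgHom_rel R (HeckeRel.LL (R := R) (t := t) (ℓ := ℓ) (κ := κ) j k)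

theorem commute_Tgen_Lgen {r : Fin (n - 1)} {k : Fin n} (hl : k ≠ pL r) (hr : k ≠ pR r) :
    Commute (Tgen R t n ℓ κ r) (Lgen R t n ℓ κ k) := by
  simpa only [map_mul, Tgen, Lgen, Commute, SemiconjBy] using RingQuot.mkAlgHom_rel R
    (HeckeRel.TL (R := R) (t := t) (ℓ := ℓ) (κ := κ) r k ⟨Fin.val_ne_of_ne hl, Fin.val_ne_of_ne hr⟩)

theorem Tgen_quadratic (r : Fin (n - 1)) :
    (Tgen R t n ℓ κ r + 1) * (Tgen R t n ℓ κ r - algebraMap R _ (t : R)) = 0 := by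
  simpa only [map_mul, map_add, map_sub, map_one, map_zero, AlgHom.commutes, Tgen] using
    RingQuot.mkAlgHom_rel R (HeckeRel.quad (R := R) (t := t) (ℓ := ℓ) (κ := κ) r)

theorem Lgen_pR_mul (r : Fin (n - 1)) :
    Lgen R t n ℓ κ (pR r) * (Tgen R t n ℓ κ r - algebraMap R _ (t : R) + 1) =
      Tgen R t n ℓ κ r * Lgen R t n ℓ κ (pL r) + 1 := by
  simpa only [map_mul, map_add, map_sub, map_one, AlgHom.commutes, Tgen, Lgen] using
    RingQuot.mkAlgHom_rel R (HeckeRel.LT (R := R) (t := t) (ℓ := ℓ) (κ := κ) r)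

theorem Tgen_mul_self_sub_add_one (r : Fin (n - 1)) :
    Tgen R t n ℓ κ r * (Tgen R t n ℓ κ r - algebraMap R _ (t : R) + 1) =
      algebraMap R _ (t : R) := by
  rw [← sub_eq_zero, ← Tgen_quadratic R t n ℓ κ r]
  noncomm_ring

theorem commute_Tgen_self_sub_add_one (r : Fin (n - 1)) :
    Commute (Tgen R t n ℓ κ r) (Tgen R t n ℓ κ r - algebraMap R _ (t : R) + 1) :=
  ((Commute.refl _).sub_right (Algebra.commute_algebraMap_right _ _)).add_right
    (Commute.one_right _)

theorem Tgen_sub_add_one_mul_Lgen_pR (r : Fin (n - 1)) :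
    (Tgen R t n ℓ κ r - algebraMap R _ (t : R) + 1) * Lgen R t n ℓ κ (pR r) =
      Lgen R t n ℓ κ (pL r) * Tgen R t n ℓ κ r + 1 := by
  have hprod := Tgen_mul_self_sub_add_one R t n ℓ κ r
  have hcomm := commute_Tgen_self_sub_add_one R t n ℓ κ r
  refine mul_eq_mul_add_one_of_mul_eq_mul_add_one ?_ hcomm ?_ (Lgen_pR_mul R t n ℓ κ r)
  -- `T_r - t + 1 = t T_r⁻¹` is a unit by the quadratic relation.
  · refine (hcomm.isUnit_mul_iff.1 ?_).2
    rw [hprod]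
    exact t.isUnit.map _
  · rw [hprod]
    exact Algebra.commute_algebraMap_left _ _

theorem Tgen_mul_Lgen_pL (r : Fin (n - 1)) :
    Tgen R t n ℓ κ r * Lgen R t n ℓ κ (pL r) = Lgen R t n ℓ κ (pR r) * Tgen R t n ℓ κ r -
      ((algebraMap R _ (t : R) - 1) * Lgen R t n ℓ κ (pR r) + 1) := by
  rw [eq_sub_of_add_eq (Lgen_pR_mul R t n ℓ κ r).symm, mul_add, mul_sub, sub_mul, one_mul,
    mul_one, Algebra.commutes (t : R)]
  abel

theorem Tgen_mul_Lgen_pR (r : Fin (n - 1)) :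
    Tgen R t n ℓ κ r * Lgen R t n ℓ κ (pR r) = Lgen R t n ℓ κ (pL r) * Tgen R t n ℓ κ r +
      ((algebraMap R _ (t : R) - 1) * Lgen R t n ℓ κ (pR r) + 1) := by
  rw [eq_sub_of_add_eq (Tgen_sub_add_one_mul_Lgen_pR R t n ℓ κ r).symm, add_mul, sub_mul,
    sub_mul, one_mul]
  abel

/-- The evaluation of polynomials at the Jucys–Murphy elements `L_1, …, L_n`. -/
noncomputable def jucysMurphyEval : MvPolynomial (Fin n) R →ₐ[R] CycHecke R t n ℓ κ :=
  aevalOfCommute (Lgen R t n ℓ κ) (commute_Lgen R t n ℓ κ)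

@[simp]
theorem jucysMurphyEval_X (k : Fin n) :
    jucysMurphyEval R t n ℓ κ (MvPolynomial.X k) = Lgen R t n ℓ κ k :=
  aevalOfCommute_X _ _ k

theorem commute_Tgen_jucysMurphyEval [IsDomain R] {r : Fin (n - 1)}
    {P : MvPolynomial (Fin n) R} (hP : MvPolynomial.rename (Equiv.swap (pL r) (pR r)) P = P) :
    Commute (Tgen R t n ℓ κ r) (jucysMurphyEval R t n ℓ κ P) := by
  let g : MvPolynomial (Fin n) R :=
    (algebraMap R _ (t : R) - 1) * MvPolynomial.X (pR r) + 1
  have hg : jucysMurphyEval R t n ℓ κ g =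
      (algebraMap R _ (t : R) - 1) * Lgen R t n ℓ κ (pR r) + 1 := by
    simp only [g, map_add, map_mul, map_sub, map_one, AlgHom.commutes, jucysMurphyEval_X]
  obtain ⟨Q, hQ⟩ := IsDividedDifference.exists_of_X
    (φ := jucysMurphyEval R t n ℓ κ) (T := Tgen R t n ℓ κ r) (a := pL r) (b := pR r) (g := g)
    (by simp only [hg, jucysMurphyEval_X, Tgen_mul_Lgen_pL])
    (by simp only [hg, jucysMurphyEval_X, Tgen_mul_Lgen_pR])
    (fun k hl hr => by simpa only [jucysMurphyEval_X] using commute_Tgen_Lgen R t n ℓ κ hl hr) P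
  exact hQ.commute_of_rename_eq (pL_ne_pR r) hP

end HeckeRelations

section ResidueIdempotents

variable (K : Type*) [Field K] (t : Kˣ) {n e : ℕ} (ℓ : ℕ) (κ : ℕ → ℤ)

/-- The polynomial in `n` variables whose value at the Jucys–Murphy elements is `F_T`. -/
noncomputable def idemPoly {ℓ : ℕ} (T : StdTableau ℓ n) : MvPolynomial (Fin n) K :=
  lagrangeProd (qint (t : K)) (contFinset ℓ n κ) MvPolynomial.X fun k => content κ T (k.1 + 1)

/-- The polynomial in `n` variables whose value at the Jucys–Murphy elements is `f_i`. -/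
noncomputable def resPoly (i : Fin n → ZMod e) : MvPolynomial (Fin n) K :=
  ∑ᶠ T : StdRes ℓ κ i, idemPoly K t κ T.1

theorem jucysMurphyEval_idemPoly {ℓ : ℕ} (T : StdTableau ℓ n) :
    jucysMurphyEval K t n ℓ κ (idemPoly K t κ T) = Fidem K t n ℓ κ T := by
  have hX : jucysMurphyEval K t n ℓ κ ∘ MvPolynomial.X = Lgen K t n ℓ κ :=
    funext (jucysMurphyEval_X K t n ℓ κ)
  rw [idemPoly, map_lagrangeProd, hX]
  rfl

theorem jucysMurphyEval_resPoly (i : Fin n → ZMod e) :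
    jucysMurphyEval K t n ℓ κ (resPoly K t ℓ κ i) = fres K t n ℓ e κ i := by
  rw [resPoly, map_finsum _ (Set.toFinite _)]
  exact finsum_congr fun T => jucysMurphyEval_idemPoly K t κ T.1

theorem rename_idemPoly {ℓ : ℕ} (T : StdTableau ℓ n) {r : Fin (n - 1)} (hT : T.IsSwappable r) :
    MvPolynomial.rename (Equiv.swap (pL r) (pR r)) (idemPoly K t κ T) =
      idemPoly K t κ (T.swap r hT) := by
  set σ := Equiv.swap (pL r) (pR r)
  have hX : MvPolynomial.rename σ ∘ MvPolynomial.X = (MvPolynomial.X ∘ σ : _ → MvPolynomial _ K) :=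
    funext fun k => MvPolynomial.rename_X σ k
  have hcontent : (fun k : Fin n => content κ T (k.1 + 1)) =
      (fun k : Fin n => content κ (T.swap r hT) (k.1 + 1)) ∘ σ := by
    funext k
    rw [Function.comp_apply, T.content_swap κ hT, Equiv.swap_apply_self]
  rw [idemPoly, idemPoly, map_lagrangeProd, hX, hcontent, lagrangeProd_comp_perm]

theorem rename_resPoly (he : e ≠ 1) {i : Fin n → ZMod e} {r : Fin (n - 1)}
    (h : i (pL r) = i (pR r)) :
    MvPolynomial.rename (Equiv.swap (pL r) (pR r)) (resPoly K t ℓ κ i) = resPoly K t ℓ κ i := by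
  rw [resPoly, map_finsum _ (Set.toFinite _)]
  exact finsum_eq_of_bijective _ (StdRes.swap_involutive he h).bijective fun T =>
    rename_idemPoly K t κ T.1 (T.isSwappable he h)

end ResidueIdempotents

theorem intertwiner_equal_residues_general (n ℓ e : ℕ) (he : e ≠ 1) (κ : ℕ → ℤ)
    (K : Type*) [Field K] (t : Kˣ) (i : Fin n → ZMod e) (r : Fin (n - 1))
    (h : i (pL r) = i (pR r)) :
    Tgen K t n ℓ κ r * fres K t n ℓ e κ i = fres K t n ℓ e κ i * Tgen K t n ℓ κ r := by
  rw [← jucysMurphyEval_resPoly]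
  exact commute_Tgen_jucysMurphyEval K t n ℓ κ (rename_resPoly K t ℓ κ he h)

/-- Lemma L:IntertwinerEq: if `i_r = i_{r+1}` then `T_r` commutes
with the residue idempotent `f_i`. -/
theorem intertwiner_equal_residues (n ℓ e : ℕ) (he : e ≠ 1) (κ : ℕ → ℤ)
    (K : Type) [Field K] (t : Kˣ) (hsep : SeparatesF t n ℓ κ)
    (i : Fin n → ZMod e) (r : Fin (n - 1)) (h : i (pL r) = i (pR r)) :
    Tgen K t n ℓ κ r * fres K t n ℓ e κ i = fres K t n ℓ e κ i * Tgen K t n ℓ κ r :=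
  intertwiner_equal_residues_general n ℓ e he κ K t i r h

end Paper
end

section
/- Let K be a field, t ∈ K^×, κ ∈ Z^ℓ a multicharge, e ∈ {0,2,3,4,…}, and suppose (K,t) separates Std(P_n). If i ∈ I^n and 1 ≤ r < n satisfy i_r ≠ i_{r+1}, and j = s_r·i is i with its r-th and (r+1)-st entries swapped, then (T_r L_r − L_r T_r) f_i = f_j (T_r L_r − L_r T_r) in H_n(K,t,κ), where f_i and f_j are residue idempotents. -/
open scoped BigOperators
open scoped Classical

/-!
The intertwiner `M_r = T_r L_r - L_r T_r` satisfies `L_r M_r = M_r L_{r+1}` and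
`L_{r+1} M_r = M_r L_r`, and commutes with all other `L_k`; hence it carries joint eigenvectors of
the `L_k` of weight `w` to joint eigenvectors of weight `s_r w`. Under separation the regular
representation is a sum of joint eigenspaces whose weights are the quantum content sequences of
standard tableaux: inductively, on the weight space of a tableau of size `m`, the next `L` is
diagonalisable, and its eigenvalues are the quantum contents of the addable nodes. Here the
candidate eigenvalues come from the factorisation of `M_r²` as a polynomial in `L_r` and `L_{r+1}`,
and the spurious ones are excluded by the braid relation. The idempotent `f_i` acts on the weight
space of a tableau `U` by `1` or `0` according to whether `res U = i`, while `M_r` maps this space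
to `0` or into the weight space of `s_r U`, whose residue sequence is `s_r · res U`.
-/

namespace Paper

/-! ## Quantum integers and separation -/

section QuantumIntegers

variable {K : Type*} [Field K] {x : K}

theorem qint_zero (x : K) : qint x 0 = 0 := by simp [qint]

theorem qint_one (x : K) : qint x 1 = 1 := by simp [qint]

theorem qint_add_one (x : K) (d : ℤ) : qint x (d + 1) = qint x d + x ^ d := by
  obtain ⟨k, rfl | rfl⟩ : ∃ k : ℕ, d = k ∨ d = -((k : ℤ) + 1) := by
    rcases le_or_gt 0 d with h | h
    exacts [⟨d.toNat, by omega⟩, ⟨(-d - 1).toNat, by omega⟩]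
  · rw [qint, qint, if_pos (by omega), if_pos (by omega),
      show ((k : ℤ) + 1).toNat = k + 1 by omega, Finset.sum_range_succ]
    simp only [Int.toNat_natCast, zpow_natCast]
  · rcases k with _ | k
    · simp [qint]
    · rw [qint, qint, if_neg (by omega), if_neg (by omega),
        show (-(-(((k + 1 : ℕ) : ℤ) + 1) + 1)).toNat = k + 1 by omega,
        show (-(-(((k + 1 : ℕ) : ℤ) + 1))).toNat = k + 1 + 1 by omega,
        Finset.sum_range_succ _ (k + 1)]
      ring

theorem qint_add (hx : x ≠ 0) (a b : ℤ) : qint x (a + b) = qint x a + x ^ a * qint x b := by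
  induction b using Int.induction_on with
  | zero => simp [qint_zero]
  | succ b ih => rw [← add_assoc, qint_add_one x, ih, qint_add_one x, zpow_add₀ hx]; ring
  | pred b ih =>
    have h_sum := qint_add_one x (a + (-(b : ℤ) - 1))
    have h_pred := qint_add_one x (-(b : ℤ) - 1)
    rw [show a + (-(b : ℤ) - 1) + 1 = a + -(b : ℤ) by ring, zpow_add₀ hx] at h_sum
    rw [sub_add_cancel] at h_pred
    rw [ih, h_pred] at h_sum
    linear_combination -h_sum

theorem qint_add_one_eq_mul_add (hx : x ≠ 0) (a : ℤ) : qint x (a + 1) = x * qint x a + 1 := by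
  rw [add_comm, qint_add hx, qint_one, zpow_one, add_comm]

theorem sub_one_mul_qint_add_one (hx : x ≠ 0) (a : ℤ) : (x - 1) * qint x a + 1 = x ^ a := by
  linear_combination qint_add_one x a - qint_add_one_eq_mul_add hx a

theorem qint_eq_qint_iff (hx : x ≠ 0) (a b : ℤ) :
    qint x a = qint x b ↔ qint x (a - b) = 0 := by
  rw [← add_sub_cancel b a, qint_add hx, add_sub_cancel, add_eq_left,
    mul_eq_zero_iff_left (zpow_ne_zero b hx)]

theorem qint_neg_eq_zero_iff (hx : x ≠ 0) (a : ℤ) : qint x (-a) = 0 ↔ qint x a = 0 := by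
  rw [← zero_sub, ← qint_eq_qint_iff hx, eq_comm, qint_zero]

theorem qintU_eq_qint (t : Kˣ) (d : ℤ) : qintU t d = qint (t : K) d := by
  simp [qint, qintU]

end QuantumIntegers

namespace SeparatesF

variable {K : Type*} [Field K] {t : Kˣ} {n ℓ : ℕ} {κ : ℕ → ℤ}

theorem qint_ne_zero (hsep : SeparatesF t n ℓ κ) {d : ℤ} (hd : d ≠ 0) (hdn : |d| ≤ n) :
    qint (t : K) d ≠ 0 := by
  rw [Int.abs_eq_natAbs] at hdn
  have natAbs_ne_zero : qint (t : K) (d.natAbs : ℤ) ≠ 0 :=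
    Finset.prod_ne_zero_iff.mp (left_ne_zero_of_mul hsep) d.natAbs (Finset.mem_Icc.mpr (by omega))
  rcases Int.natAbs_eq d with h | h
  · rwa [h]
  · rwa [h, Ne, qint_neg_eq_zero_iff t.ne_zero]

theorem qint_sub_add_ne_zero (hsep : SeparatesF t n ℓ κ) {l m : ℕ} (hl : l < ℓ) (hm : m < ℓ)
    (hlm : l ≠ m) {d : ℤ} (hd : |d| < n) : qint (t : K) (κ l - κ m + d) ≠ 0 := by
  wlog h : l < m generalizing l m d
  · rw [Ne, ← qint_neg_eq_zero_iff t.ne_zero,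
      show -(κ l - κ m + d) = κ m - κ l + -d by ring]
    exact this hm hl hlm.symm (by rwa [abs_neg]) (by omega)
  · have hprod := right_ne_zero_of_mul hsep
    simp only [Finset.prod_ne_zero_iff] at hprod
    exact hprod l (Finset.mem_range.mpr hl) m (Finset.mem_Ioo.mpr ⟨h, hm⟩) d
      (Finset.mem_Ioo.mpr (abs_lt.mp hd))

end SeparatesF

/-! ## Diagrams and addable nodes -/

/-- The diagonal `c - r` of a node `(l, r, c)`. -/
def diag (A : Node) : ℤ := (A.2.2 : ℤ) - (A.2.1 : ℤ)

/-- The content `κ_l + c - r` of a node `(l, r, c)`. -/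
def nodeContent (κ : ℕ → ℤ) (A : Node) : ℤ := κ A.1 + (A.2.2 : ℤ) - (A.2.1 : ℤ)

/-- The node obtained by exchanging rows and columns within each component. -/
def transpose (A : Node) : Node := (A.1, A.2.2, A.2.1)

theorem nodeContent_eq (κ : ℕ → ℤ) (A : Node) : nodeContent κ A = κ A.1 + diag A :=
  add_sub_assoc ..

theorem nodeContent_eq_add {κ : ℕ → ℤ} {A B : Node} {δ : ℤ} (hcomp : A.1 = B.1)
    (hdiag : diag A = diag B + δ) : nodeContent κ A = nodeContent κ B + δ := by
  rw [nodeContent_eq, nodeContent_eq, hcomp, hdiag, add_assoc]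

theorem transpose_involutive : Function.Involutive transpose := fun _ => rfl

theorem diag_transpose (A : Node) : diag (transpose A) = -diag A := by
  simp [diag, transpose]

section Diagrams

variable {ℓ : ℕ} {S T : Set Node} {A B : Node}

theorem isDiagramSet_empty (ℓ : ℕ) : IsDiagramSet ℓ ∅ := by
  simp [IsDiagramSet]

theorem IsDiagramSet.union (hS : IsDiagramSet ℓ S) (hT : IsDiagramSet ℓ T) :
    IsDiagramSet ℓ (S ∪ T) :=
  ⟨hS.1.union hT.1, fun A hA => hA.elim (hS.2.1 A) (hT.2.1 A),
    fun l r c => Or.imp (hS.2.2.1 l r c) (hT.2.2.1 l r c),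
    fun l r c => Or.imp (hS.2.2.2 l r c) (hT.2.2.2 l r c)⟩

theorem IsDiagramSet.mem_of_le (hS : IsDiagramSet ℓ S) (hB : B ∈ S) (hcomp : A.1 = B.1)
    (hrow : A.2.1 ≤ B.2.1) (hcol : A.2.2 ≤ B.2.2) : A ∈ S := by
  obtain ⟨l, r, c⟩ := A
  obtain ⟨l', r', c'⟩ := B
  obtain rfl : l = l' := hcomp
  exact Nat.decreasingInduction' (P := fun i => (l, r, i) ∈ S) (fun i _ _ => hS.2.2.1 l r i) hcol
    (Nat.decreasingInduction' (P := fun i => (l, i, c') ∈ S) (fun i _ _ => hS.2.2.2 l i c')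
      hrow hB)

theorem IsDiagramSet.transpose (hS : IsDiagramSet ℓ S) : IsDiagramSet ℓ (transpose '' S) := by
  rw [transpose_involutive.image_eq_preimage_symm]
  exact ⟨hS.1.preimage transpose_involutive.injective.injOn, fun A => hS.2.1 (Paper.transpose A),
    fun l r c => hS.2.2.2 l c r, fun l r c => hS.2.2.1 l c r⟩

theorem Addable.transpose (hA : Addable ℓ S A) :
    Addable ℓ (Paper.transpose '' S) (Paper.transpose A) := by
  refine ⟨fun h => hA.1 ((transpose_involutive.injective.mem_set_image).mp h), ?_⟩
  rw [← Set.image_singleton, ← Set.image_union]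
  exact hA.2.transpose

theorem Addable.comp_lt (hA : Addable ℓ S A) : A.1 < ℓ := hA.2.2.1 A (Or.inr rfl)

theorem addable_iff (hS : IsDiagramSet ℓ S) :
    Addable ℓ S A ↔ A ∉ S ∧ A.1 < ℓ ∧ (∀ i, A.2.2 = i + 1 → (A.1, A.2.1, i) ∈ S) ∧
      ∀ i, A.2.1 = i + 1 → (A.1, i, A.2.2) ∈ S := by
  obtain ⟨l, r, c⟩ := A
  constructor
  · rintro ⟨hnotMem, hdiag⟩
    refine ⟨hnotMem, Addable.comp_lt ⟨hnotMem, hdiag⟩, ?_, ?_⟩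
    · rintro i rfl
      exact (hdiag.2.2.1 l r i (Or.inr rfl)).resolve_right (by simp)
    · rintro i rfl
      exact (hdiag.2.2.2 l i c (Or.inr rfl)).resolve_right (by simp)
  · rintro ⟨hnotMem, hcomp, hleft, habove⟩
    refine ⟨hnotMem, hS.1.union (Set.finite_singleton _), ?_, ?_, ?_⟩
    · rintro B (hB | rfl)
      exacts [hS.2.1 B hB, hcomp]
    · rintro l' r' c' (hB | hB)
      · exact Or.inl (hS.2.2.1 _ _ _ hB)
      · obtain ⟨rfl, rfl, rfl⟩ : l' = l ∧ r' = r ∧ c' + 1 = c := by simpa using hB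
        exact Or.inl (hleft c' rfl)
    · rintro l' r' c' (hB | hB)
      · exact Or.inl (hS.2.2.2 _ _ _ hB)
      · obtain ⟨rfl, rfl, rfl⟩ : l' = l ∧ r' + 1 = r ∧ c' = c := by simpa using hB
        exact Or.inl (habove r' rfl)

theorem Addable.union_singleton (hA : Addable ℓ S A) (hB : Addable ℓ S B) (hne : A ≠ B) :
    Addable ℓ (S ∪ {A}) B := by
  refine ⟨fun h => h.elim hB.1 (fun h => hne h.symm), ?_⟩
  rw [Set.union_assoc, Set.union_union_distrib_left]
  exact hA.2.union hB.2

theorem Addable.of_union_singleton (hS : IsDiagramSet ℓ S) (hA : IsDiagramSet ℓ (S ∪ {A}))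
    (hB : Addable ℓ (S ∪ {A}) B) :
    Addable ℓ S B ∨ B.1 = A.1 ∧ (diag B = diag A + 1 ∨ diag B = diag A + -1) := by
  rw [or_iff_not_imp_right]
  intro hfar
  rw [addable_iff hA] at hB
  obtain ⟨hnotMem, hcomp, hleft, habove⟩ := hB
  refine (addable_iff hS).mpr ⟨fun h => hnotMem (Or.inl h), hcomp, fun i hi => ?_, fun i hi => ?_⟩
  · refine (hleft i hi).resolve_right fun h => hfar ?_
    simp only [diag, ← Set.mem_singleton_iff.mp h, hi, true_and]
    omega
  · refine (habove i hi).resolve_right fun h => hfar ?_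
    simp only [diag, ← Set.mem_singleton_iff.mp h, hi, true_and]
    omega

theorem Addable.not_le (hS : IsDiagramSet ℓ S) (hA : Addable ℓ S A) (hB : B ∈ S)
    (hcomp : A.1 = B.1) : ¬ (A.2.1 ≤ B.2.1 ∧ A.2.2 ≤ B.2.2) :=
  fun h => hA.1 (hS.mem_of_le hB hcomp h.1 h.2)

theorem Addable.row_le_of_diag_eq (hS : IsDiagramSet ℓ S) (hA : Addable ℓ S A)
    (hB : Addable ℓ S B) (hcomp : A.1 = B.1) (hdiag : diag A = diag B) : B.2.1 ≤ A.2.1 := by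
  by_contra! hlt
  have hmem := ((addable_iff hS).mp hB).2.2.2 (B.2.1 - 1) (by omega)
  refine hA.not_le hS hmem hcomp ?_
  simp only [diag] at hdiag ⊢
  omega

theorem Addable.eq_of_diag_eq (hS : IsDiagramSet ℓ S) (hA : Addable ℓ S A)
    (hB : Addable ℓ S B) (hcomp : A.1 = B.1) (hdiag : diag A = diag B) : A = B := by
  have hrow := le_antisymm (hB.row_le_of_diag_eq hS hA hcomp.symm hdiag.symm)
    (hA.row_le_of_diag_eq hS hB hcomp hdiag)
  refine Prod.ext hcomp (Prod.ext hrow ?_)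
  simp only [diag] at hdiag
  omega

theorem Addable.diag_ne_add_one (hS : IsDiagramSet ℓ S) (hA : Addable ℓ S A)
    (hB : Addable ℓ S B) (hcomp : A.1 = B.1) : diag A ≠ diag B + 1 := by
  intro hdiag
  simp only [diag] at hdiag
  rcases lt_or_ge A.2.1 B.2.1 with h | h
  · have hmem := ((addable_iff hS).mp hB).2.2.2 (B.2.1 - 1) (by omega)
    refine hA.not_le hS hmem hcomp ?_
    simp only
    omega
  · have hmem := ((addable_iff hS).mp hA).2.2.1 (A.2.2 - 1) (by omega)
    refine hB.not_le hS hmem hcomp.symm ?_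
    simp only
    omega

theorem IsDiagramSet.col_add_row_lt_ncard (hS : IsDiagramSet ℓ S) (hA : A ∈ S) (hB : B ∈ S)
    (hcomp : A.1 = B.1) : A.2.2 + B.2.1 < S.ncard := by
  -- The first row up to column `c` and the first column up to row `r` share one node only.
  let hook (j : ℕ) : Node := if j ≤ A.2.2 then (A.1, 0, j) else (A.1, j - A.2.2, 0)
  rw [← Nat.add_one_le_iff, ← Set.ncard_Iio_nat (_ + _ + 1)]
  refine Set.ncard_le_ncard_of_injOn hook (fun j hj => ?_) (fun i _ j _ hij => ?_) hS.1
  · have : j < A.2.2 + B.2.1 + 1 := hj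
    simp only [hook]
    split_ifs with h
    · exact hS.mem_of_le hA rfl (Nat.zero_le _) h
    · exact hS.mem_of_le hB hcomp (show j - A.2.2 ≤ B.2.1 by omega) (Nat.zero_le _)
  · simp only [hook] at hij
    split_ifs at hij <;> simp only [Prod.mk.injEq, true_and] at hij <;> omega

theorem IsDiagramSet.col_add_row_add_one_lt_ncard (hS : IsDiagramSet ℓ S) (hA : A ∈ S)
    (hB : B ∈ S) (hcomp : A.1 ≠ B.1) : A.2.2 + B.2.1 + 1 < S.ncard := by
  let arms (j : ℕ) : Node := if j ≤ A.2.2 then (A.1, 0, j) else (B.1, j - A.2.2 - 1, 0)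
  rw [← Nat.add_one_le_iff, ← Set.ncard_Iio_nat (_ + _ + 1)]
  refine Set.ncard_le_ncard_of_injOn arms (fun j hj => ?_) (fun i _ j _ hij => ?_) hS.1
  · have : j < A.2.2 + B.2.1 + 1 + 1 := hj
    simp only [arms]
    split_ifs with h
    · exact hS.mem_of_le hA rfl (Nat.zero_le _) h
    · exact hS.mem_of_le hB rfl (show j - A.2.2 - 1 ≤ B.2.1 by omega) (Nat.zero_le _)
  · simp only [arms] at hij
    split_ifs at hij <;>
      simp only [Prod.mk.injEq, true_and, hcomp, hcomp.symm, false_and] at hij <;> omega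

theorem IsDiagramSet.abs_diag_sub_lt_ncard (hS : IsDiagramSet ℓ S) (hA : A ∈ S) (hB : B ∈ S)
    (hcomp : A.1 = B.1) : |diag A - diag B| < S.ncard := by
  have hAB := hS.col_add_row_lt_ncard hA hB hcomp
  have hBA := hS.col_add_row_lt_ncard hB hA hcomp.symm
  simp only [diag, abs_lt]
  omega

theorem IsDiagramSet.abs_diag_sub_add_one_lt_ncard (hS : IsDiagramSet ℓ S)
    (hA : A ∈ S) (hB : B ∈ S) (hcomp : A.1 ≠ B.1) : |diag A - diag B| + 1 < S.ncard := by
  have hAB := hS.col_add_row_add_one_lt_ncard hA hB hcomp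
  have hBA := hS.col_add_row_add_one_lt_ncard hB hA hcomp.symm
  rw [← lt_sub_iff_add_lt]
  simp only [diag, abs_lt]
  omega

end Diagrams

section SeparatedDiagrams

variable {K : Type*} [Field K] {t : Kˣ} {n ℓ : ℕ} {κ : ℕ → ℤ} {S : Set Node} {A B : Node} {δ : ℤ}

theorem SeparatesF.comp_eq_and_diag_eq_of_mem (hsep : SeparatesF t n ℓ κ) (hS : IsDiagramSet ℓ S)
    (hA : A ∈ S) (hB : B ∈ S) (hcard : S.ncard + |δ| ≤ n + 1)
    (h : qint (t : K) (nodeContent κ A) = qint (t : K) (nodeContent κ B + δ)) :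
    A.1 = B.1 ∧ diag A = diag B + δ := by
  have htri := abs_sub (diag A - diag B) δ
  rw [qint_eq_qint_iff t.ne_zero, nodeContent_eq, nodeContent_eq,
    show κ A.1 + diag A - (κ B.1 + diag B + δ) = κ A.1 - κ B.1 + (diag A - diag B - δ) by ring] at h
  by_cases hcomp : A.1 = B.1
  · refine ⟨hcomp, ?_⟩
    by_contra hdiag
    rw [hcomp, sub_self, zero_add] at h
    have := hS.abs_diag_sub_lt_ncard hA hB hcomp
    exact hsep.qint_ne_zero (by omega) (by omega) h
  · have := hS.abs_diag_sub_add_one_lt_ncard hA hB hcomp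
    exact (hsep.qint_sub_add_ne_zero (hS.2.1 A hA) (hS.2.1 B hB) hcomp (by omega) h).elim

theorem SeparatesF.comp_eq_and_diag_eq_of_addable (hsep : SeparatesF t n ℓ κ)
    (hA : Addable ℓ S A) (hB : Addable ℓ S B) (hcard : S.ncard + 1 + |δ| ≤ n)
    (h : qint (t : K) (nodeContent κ A) = qint (t : K) (nodeContent κ B + δ)) :
    A.1 = B.1 ∧ diag A = diag B + δ := by
  have hAB := hA.2.union hB.2
  rw [← Set.union_union_distrib_left] at hAB
  have hcard_union := Set.ncard_union_le S ({A} ∪ {B})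
  have hcard_pair := Set.ncard_union_le {A} {B}
  rw [Set.ncard_singleton, Set.ncard_singleton] at hcard_pair
  exact hsep.comp_eq_and_diag_eq_of_mem hAB (by simp) (by simp) (by omega) h

theorem SeparatesF.eq_of_addable (hsep : SeparatesF t n ℓ κ) (hS : IsDiagramSet ℓ S)
    (hA : Addable ℓ S A) (hB : Addable ℓ S B) (hcard : S.ncard < n)
    (h : qint (t : K) (nodeContent κ A) = qint (t : K) (nodeContent κ B)) : A = B := by
  obtain ⟨hcomp, hdiag⟩ := hsep.comp_eq_and_diag_eq_of_addable hA hB (δ := 0)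
    (by rw [abs_zero]; omega) (by rwa [add_zero])
  exact hA.eq_of_diag_eq hS hB hcomp (by rwa [add_zero] at hdiag)

theorem SeparatesF.qint_addable_ne (hsep : SeparatesF t n ℓ κ) (hS : IsDiagramSet ℓ S)
    (hA : Addable ℓ S A) (hB : Addable ℓ S B) (hcard : S.ncard + 2 ≤ n) (hδ : δ = 1 ∨ δ = -1) :
    qint (t : K) (nodeContent κ A) ≠ qint (t : K) (nodeContent κ B + δ) := by
  intro h
  have habs : |δ| = 1 := by rcases hδ with rfl | rfl <;> rfl
  obtain ⟨hcomp, hdiag⟩ := hsep.comp_eq_and_diag_eq_of_addable hA hB (by omega) h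
  rcases hδ with rfl | rfl
  · exact hA.diag_ne_add_one hS hB hcomp hdiag
  · exact hB.diag_ne_add_one hS hA hcomp.symm (by omega)

end SeparatedDiagrams

/-! ## Standard paths -/

/-- The first `m` terms of `s` form a standard path: starting from the empty diagram, each term is
an addable node of the diagram formed by the preceding ones. Standard paths of length `n` encode
standard tableaux of size `n`. -/
def IsStdPath (ℓ m : ℕ) (s : ℕ → Node) : Prop := ∀ k < m, Addable ℓ (s '' Set.Iio k) (s k)

theorem image_Iio_add_one {α : Type*} (s : ℕ → α) (k : ℕ) :
    s '' Set.Iio (k + 1) = s '' Set.Iio k ∪ {s k} := by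
  rw [← Set.image_singleton, ← Set.image_union]
  congr 1
  ext j
  exact Nat.lt_succ_iff_lt_or_eq

theorem ncard_image_Iio_le {α : Type*} (s : ℕ → α) (k : ℕ) : (s '' Set.Iio k).ncard ≤ k :=
  (Set.ncard_image_le).trans_eq (Set.ncard_Iio_nat k)

theorem image_Iio_congr {α : Type*} {s s' : ℕ → α} {k m : ℕ} (hk : k ≤ m)
    (h : ∀ j < m, s j = s' j) : s '' Set.Iio k = s' '' Set.Iio k :=
  Set.image_congr fun j hj => h j (lt_of_lt_of_le hj hk)

namespace IsStdPath

variable {ℓ m k : ℕ} {s s' : ℕ → Node}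

theorem isDiagramSet (h : IsStdPath ℓ m s) : ∀ {k}, k ≤ m → IsDiagramSet ℓ (s '' Set.Iio k)
  | 0, _ => by simpa using isDiagramSet_empty ℓ
  | k + 1, hk => by rw [image_Iio_add_one]; exact (h k hk).2

theorem mono (h : IsStdPath ℓ m s) (hk : k ≤ m) : IsStdPath ℓ k s :=
  fun j hj => h j (hj.trans_le hk)

theorem update (h : IsStdPath ℓ m s) {A : Node} (hA : Addable ℓ (s '' Set.Iio m) A) :
    IsStdPath ℓ (m + 1) (Function.update s m A) := by
  have heq (k : ℕ) (hk : k < m) : Function.update s m A k = s k := Function.update_of_ne hk.ne A s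
  intro k hk
  rw [image_Iio_congr (Nat.lt_succ_iff.mp hk) heq]
  rcases Nat.lt_succ_iff_lt_or_eq.mp hk with hk | rfl
  · rw [heq k hk]
    exact h k hk
  · rwa [Function.update_self]

theorem index_eq (h : IsStdPath ℓ m s) {j k : ℕ} (hj : j < m) (hk : k < m)
    (heq : s j = s k) : j = k := by
  rcases lt_trichotomy j k with hlt | rfl | hlt
  · exact absurd ⟨j, hlt, heq⟩ (h k hk).1
  · rfl
  · exact absurd ⟨k, hlt, heq.symm⟩ (h j hj).1

theorem le_of_le (h : IsStdPath ℓ m s) {j k : ℕ} (hj : j < m) (hk : k < m)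
    (hcomp : (s j).1 = (s k).1) (hrow : (s j).2.1 ≤ (s k).2.1) (hcol : (s j).2.2 ≤ (s k).2.2) :
    j ≤ k := by
  obtain ⟨i, hi, heq⟩ := (h.isDiagramSet hk).mem_of_le (A := s j) (B := s k)
    ⟨k, Nat.lt_succ_self k, rfl⟩ hcomp hrow hcol
  obtain rfl := h.index_eq (lt_of_lt_of_le hi hk) hj heq
  exact Nat.lt_succ_iff.mp hi

theorem transpose (h : IsStdPath ℓ m s) : IsStdPath ℓ m (transpose ∘ s) := fun k hk => by
  rw [Set.image_comp]
  exact (h k hk).transpose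

theorem eq_of_qint_eq {K : Type*} [Field K] {t : Kˣ} {n : ℕ} {κ : ℕ → ℤ}
    (hsep : SeparatesF t n ℓ κ) (hm : m ≤ n) (h : IsStdPath ℓ m s) (h' : IsStdPath ℓ m s')
    (heq : ∀ k < m, qint (t : K) (nodeContent κ (s k)) = qint (t : K) (nodeContent κ (s' k))) :
    ∀ k < m, s k = s' k := by
  intro k
  induction k using Nat.strong_induction_on with
  | _ k ih =>
    intro hk
    have hprefix := image_Iio_congr le_rfl fun j hj => ih j hj (hj.trans hk)
    have hcard := ncard_image_Iio_le s k
    exact hsep.eq_of_addable (h.isDiagramSet hk.le) (h k hk) (hprefix ▸ h' k hk) (by omega)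
      (heq k hk)

theorem swap (h : IsStdPath ℓ m s) {r : ℕ} (hr : r + 1 < m)
    (hadd : Addable ℓ (s '' Set.Iio r) (s (r + 1))) : IsStdPath ℓ m (s ∘ Equiv.swap r (r + 1)) := by
  have hprefix {k : ℕ} (hk : k ≠ r + 1) : (s ∘ Equiv.swap r (r + 1)) '' Set.Iio k =
      s '' Set.Iio k := by
    rw [Set.image_comp]
    congr 1
    rw [Equiv.image_eq_preimage_symm, Equiv.symm_swap]
    ext j
    simp only [Set.mem_preimage, Set.mem_Iio, Equiv.swap_apply_def]
    split_ifs <;> omega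
  intro k hk
  rcases eq_or_ne k (r + 1) with rfl | hk'
  · rw [image_Iio_add_one, hprefix (by omega), Function.comp_apply, Function.comp_apply,
      Equiv.swap_apply_left, Equiv.swap_apply_right]
    refine hadd.union_singleton (h r (by omega)) fun heq => ?_
    have := h.index_eq hr (by omega) heq
    omega
  · rw [hprefix hk', Function.comp_apply]
    rcases eq_or_ne k r with rfl | hkr
    · rwa [Equiv.swap_apply_left]
    · rw [Equiv.swap_apply_of_ne_of_ne hkr hk']
      exact h k hk

theorem addable_or_adjacent (h : IsStdPath ℓ m s) {r : ℕ} (hr : r + 1 < m) :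
    Addable ℓ (s '' Set.Iio r) (s (r + 1)) ∨ (s (r + 1)).1 = (s r).1 ∧
      (diag (s (r + 1)) = diag (s r) + 1 ∨ diag (s (r + 1)) = diag (s r) + -1) := by
  have hadd := h (r + 1) hr
  have hr' : r < m := by omega
  rw [image_Iio_add_one] at hadd
  exact hadd.of_union_singleton (h.isDiagramSet hr'.le) (h r hr').2

end IsStdPath

/-- The `k`-th node of `s` lies on the diagonal `δ` away from that of the `m`-th node, and no node
strictly between them is on this or a neighbouring diagonal. -/
structure Blocks (s : ℕ → Node) (k m : ℕ) (δ : ℤ) : Prop where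
  lt : k < m
  comp_eq : (s k).1 = (s m).1
  diag_eq : diag (s k) = diag (s m) + δ
  one_lt_abs : ∀ j, k < j → j < m → (s j).1 = (s k).1 → 1 < |diag (s j) - diag (s k)|

namespace IsStdPath

variable {ℓ m : ℕ} {s : ℕ → Node}

theorem above_notMem_of_not_addable_right (h : IsStdPath ℓ (m + 1) s)
    (hright : ¬ Addable ℓ (s '' Set.Iio (m + 1)) ((s m).1, (s m).2.1, (s m).2.2 + 1)) :
    ∃ i, (s m).2.1 = i + 1 ∧ ((s m).1, i, (s m).2.2 + 1) ∉ s '' Set.Iio (m + 1) := by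
  have hm : m < m + 1 := by omega
  contrapose! hright
  refine (addable_iff (h.isDiagramSet le_rfl)).mpr ⟨?_, (h m hm).comp_lt, fun i hi => ?_, hright⟩
  · rintro ⟨j, hj, heq⟩
    have hle := h.le_of_le hm hj (by rw [heq]) (by rw [heq]) (by rw [heq]; simp)
    obtain rfl : j = m := le_antisymm (Nat.lt_succ_iff.mp hj) hle
    simpa using congrArg (fun A : Node => A.2.2) heq
  · obtain rfl : (s m).2.2 = i := by simpa using hi
    exact ⟨m, hm, rfl⟩

theorem exists_blocks_right (h : IsStdPath ℓ (m + 1) s)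
    (hright : ¬ Addable ℓ (s '' Set.Iio (m + 1)) ((s m).1, (s m).2.1, (s m).2.2 + 1)) :
    ∃ k, Blocks s k m 1 := by
  have hm : m < m + 1 := by omega
  obtain ⟨i, hi, hcorner⟩ := h.above_notMem_of_not_addable_right hright
  obtain ⟨k, hk, hsk⟩ := ((addable_iff (h.isDiagramSet hm.le)).mp (h m hm)).2.2.2 i hi
  have hk' : k < m := hk
  refine ⟨k, hk, by rw [hsk], by simp only [diag, hsk]; omega, fun j hkj hjm hcomp => ?_⟩
  rw [hsk] at hcomp ⊢
  have not_le_k : ¬ ((s j).2.1 ≤ i ∧ (s j).2.2 ≤ (s m).2.2) := fun hle => by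
    have := h.le_of_le (j := j) (k := k) (by omega) (by omega) (by rw [hsk, hcomp])
      (by rw [hsk]; exact hle.1) (by rw [hsk]; exact hle.2)
    omega
  have not_ge_m : ¬ ((s m).2.1 ≤ (s j).2.1 ∧ (s m).2.2 ≤ (s j).2.2) := fun hle => by
    have := h.le_of_le (j := m) (k := j) (by omega) (by omega) hcomp.symm hle.1 hle.2
    omega
  have not_ge_corner : ¬ (i ≤ (s j).2.1 ∧ (s m).2.2 + 1 ≤ (s j).2.2) := fun hle =>
    hcorner ((h.isDiagramSet le_rfl).mem_of_le (B := s j)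
      ⟨j, show j < m + 1 by omega, rfl⟩ hcomp.symm hle.1 hle.2)
  simp only [diag, lt_abs]
  omega

theorem exists_blocks_below (h : IsStdPath ℓ (m + 1) s)
    (hbelow : ¬ Addable ℓ (s '' Set.Iio (m + 1)) ((s m).1, (s m).2.1 + 1, (s m).2.2)) :
    ∃ k, Blocks s k m (-1) := by
  obtain ⟨k, hlt, hcomp, hdiag, habs⟩ := h.transpose.exists_blocks_right fun hadd => hbelow <| by
    have := hadd.transpose
    rwa [Set.image_comp, ← Set.image_comp Paper.transpose, transpose_involutive.comp_self,
      Set.image_id] at this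
  simp only [Function.comp_apply, diag_transpose] at hdiag habs
  refine ⟨k, hlt, hcomp, by omega, fun j hkj hjm hj => ?_⟩
  rw [← abs_neg, neg_sub']
  exact habs j hkj hjm hj

theorem exists_blocks {δ : ℤ} (h : IsStdPath ℓ (m + 1) s) (hδ : δ = 1 ∨ δ = -1)
    (hnone : ∀ B, Addable ℓ (s '' Set.Iio (m + 1)) B → B.1 = (s m).1 → diag B ≠ diag (s m) + δ) :
    ∃ k, Blocks s k m δ := by
  rcases hδ with rfl | rfl
  · exact h.exists_blocks_right fun hadd => hnone _ hadd rfl (by simp only [diag]; omega)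
  · exact h.exists_blocks_below fun hadd => hnone _ hadd rfl (by simp only [diag]; omega)

end IsStdPath

/-! ## Intertwiners -/

section Intertwiner

variable {A : Type*} [Ring A] {c X Y T : A}

theorem mul_eq_of_quadratic_of_bernstein (hc : IsUnit c) (hcY : Commute c Y)
    (hcT : Commute c T) (hquad : T * T = (c - 1) * T + c)
    (hYT : Y * T = T * X + 1 + (c - 1) * Y) : T * Y = X * T + 1 + (c - 1) * Y := by
  have hcYT : c * Y = T * X * T + T := by
    linear_combination (norm := noncomm_ring) hYT * T - Y * hquad + hcY.eq * T + hcY.eq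
  refine hc.mul_left_cancel ?_
  linear_combination (norm := noncomm_ring)
    hcT.eq * Y + T * hcYT + hquad * (X * T) + hquad - (c - 1) * hcYT

theorem mul_intertwiner_of_bernstein (hcX : Commute c X) (hXY : Commute X Y)
    (hYT : Y * T = T * X + 1 + (c - 1) * Y) :
    Y * (T * X - X * T) = (T * X - X * T) * X := by
  linear_combination (norm := noncomm_ring)
    hYT * X - X * hYT + hXY.eq * T - c * hXY.eq + hcX.eq * Y + hXY.eq

theorem mul_intertwiner_of_bernstein' (hcX : Commute c X) (hXY : Commute X Y)
    (hTY : T * Y = X * T + 1 + (c - 1) * Y) :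
    X * (T * X - X * T) = (T * X - X * T) * Y := by
  linear_combination (norm := noncomm_ring)
    X * hTY - T * hXY.eq - hTY * X - hcX.eq * Y + c * hXY.eq - hXY.eq

theorem intertwiner_eq_of_bernstein (hTY : T * Y = X * T + 1 + (c - 1) * Y) :
    T * X - X * T = T * (X - Y) + ((c - 1) * Y + 1) := by
  linear_combination (norm := noncomm_ring) hTY

theorem intertwiner_mul_self_of_bernstein (hcX : Commute c X) (hcY : Commute c Y)
    (hcT : Commute c T) (hXY : Commute X Y) (hquad : T * T = (c - 1) * T + c)
    (hYT : Y * T = T * X + 1 + (c - 1) * Y) (hTY : T * Y = X * T + 1 + (c - 1) * Y) :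
    (T * X - X * T) * (T * X - X * T) = (c * X - Y + 1) * (c * Y - X + 1) := by
  have hM := intertwiner_eq_of_bernstein hTY
  have hYM := mul_intertwiner_of_bernstein hcX hXY hYT
  have hXM := mul_intertwiner_of_bernstein' hcX hXY hTY
  have hcM : Commute c (T * X - X * T) :=
    (hcT.mul_right hcX).sub_right (hcX.mul_right hcT)
  generalize T * X - X * T = M at *
  have hMM : M * M = T * M * (Y - X) + M * ((c - 1) * X + 1) := by
    linear_combination (norm := noncomm_ring)
      hM * M + T * hXM - T * hYM + (c - 1) * hYM + hcM.eq * X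
  have hTM : T * M = ((c - 1) * T + c) * (X - Y) + T * ((c - 1) * Y + 1) := by
    linear_combination (norm := noncomm_ring) T * hM + hquad * (X - Y)
  rw [hMM, hTM, hM]
  simp only [mul_add, add_mul, mul_sub, sub_mul, mul_assoc, mul_one, one_mul, hXY.symm.eq,
    hcX.symm.left_comm, hcY.symm.left_comm, hcT.symm.left_comm]
  abel

end Intertwiner

/-- Families `L_0, L_1, …` and `T_0, T_1, …` in a `K`-algebra of which the first `n` and `n - 1`
members satisfy those relations of the cyclotomic Hecke algebra `H_n(K, t, κ)` that determine the
joint eigenvalues of the `L_k`; the later members are unconstrained. -/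
structure HeckeRelations {K : Type*} [Field K] (t : Kˣ) (n ℓ : ℕ) (κ : ℕ → ℤ) {A : Type*} [Ring A]
    [Algebra K A] (L T : ℕ → A) : Prop where
  cyclotomic : 0 < n →
    ((List.range ℓ).map fun l => L 0 - algebraMap K A (qint (t : K) (κ l))).prod = 0
  quadratic : ∀ r, r + 1 < n → T r * T r = (algebraMap K A t - 1) * T r + algebraMap K A t
  commute_L : ∀ j k, j < n → k < n → Commute (L j) (L k)
  braid : ∀ r, r + 2 < n → T r * T (r + 1) * T r = T (r + 1) * T r * T (r + 1)
  commute_T_L : ∀ r k, r + 1 < n → k < n → k ≠ r → k ≠ r + 1 → Commute (T r) (L k)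
  L_mul_T : ∀ r, r + 1 < n → L (r + 1) * T r = T r * L r + 1 + (algebraMap K A t - 1) * L (r + 1)

/-- The intertwiner `T_r L_r - L_r T_r`, which exchanges the eigenvalues of `L_r` and `L_{r+1}`. -/
def intertwiner {A : Type*} [Ring A] (L T : ℕ → A) (r : ℕ) : A := T r * L r - L r * T r

namespace HeckeRelations

variable {K : Type*} [Field K] {t : Kˣ} {n ℓ : ℕ} {κ : ℕ → ℤ} {A : Type*} [Ring A] [Algebra K A]
  {L T : ℕ → A} {r k : ℕ}

theorem map {B : Type*} [Ring B] [Algebra K B] (H : HeckeRelations t n ℓ κ L T) (φ : A →ₐ[K] B) :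
    HeckeRelations t n ℓ κ (φ ∘ L) (φ ∘ T) where
  cyclotomic hn := by simpa [map_list_prod, Function.comp_def] using congrArg φ (H.cyclotomic hn)
  quadratic r hr := by simpa using congrArg φ (H.quadratic r hr)
  commute_L j k hj hk := (H.commute_L j k hj hk).map φ
  braid r hr := by simpa using congrArg φ (H.braid r hr)
  commute_T_L r k hr hk h₁ h₂ := (H.commute_T_L r k hr hk h₁ h₂).map φ
  L_mul_T r hr := by simpa using congrArg φ (H.L_mul_T r hr)

theorem T_mul_L_succ (H : HeckeRelations t n ℓ κ L T) (hr : r + 1 < n) :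
    T r * L (r + 1) = L r * T r + 1 + (algebraMap K A t - 1) * L (r + 1) :=
  mul_eq_of_quadratic_of_bernstein (t.isUnit.map _) (Algebra.commutes _ _) (Algebra.commutes _ _)
    (H.quadratic r hr) (H.L_mul_T r hr)

theorem L_succ_mul_intertwiner (H : HeckeRelations t n ℓ κ L T) (hr : r + 1 < n) :
    L (r + 1) * intertwiner L T r = intertwiner L T r * L r :=
  mul_intertwiner_of_bernstein (Algebra.commutes _ _) (H.commute_L _ _ (by omega) hr)
    (H.L_mul_T r hr)

theorem L_mul_intertwiner (H : HeckeRelations t n ℓ κ L T) (hr : r + 1 < n) :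
    L r * intertwiner L T r = intertwiner L T r * L (r + 1) :=
  mul_intertwiner_of_bernstein' (Algebra.commutes _ _) (H.commute_L _ _ (by omega) hr)
    (H.T_mul_L_succ hr)

theorem commute_L_intertwiner (H : HeckeRelations t n ℓ κ L T) (hr : r + 1 < n) (hk : k < n)
    (h₁ : k ≠ r) (h₂ : k ≠ r + 1) : Commute (L k) (intertwiner L T r) :=
  have hT := (H.commute_T_L r k hr hk h₁ h₂).symm
  have hL := H.commute_L k r hk (by omega)
  (hT.mul_right hL).sub_right (hL.mul_right hT)

theorem intertwiner_eq (H : HeckeRelations t n ℓ κ L T) (hr : r + 1 < n) :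
    intertwiner L T r = T r * (L r - L (r + 1)) + ((algebraMap K A t - 1) * L (r + 1) + 1) :=
  intertwiner_eq_of_bernstein (H.T_mul_L_succ hr)

theorem intertwiner_mul_self (H : HeckeRelations t n ℓ κ L T) (hr : r + 1 < n) :
    intertwiner L T r * intertwiner L T r =
      (algebraMap K A t * L r - L (r + 1) + 1) * (algebraMap K A t * L (r + 1) - L r + 1) :=
  intertwiner_mul_self_of_bernstein (Algebra.commutes _ _) (Algebra.commutes _ _)
    (Algebra.commutes _ _) (H.commute_L _ _ (by omega) hr) (H.quadratic r hr) (H.L_mul_T r hr)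
    (H.T_mul_L_succ hr)

end HeckeRelations

/-! ## Sums of eigenspaces -/

section Eigenspaces

variable {K V : Type*} [Field K] [AddCommGroup V] [Module K V] {f : Module.End K V}
  {W : Submodule K V} {S : Set K} {μ : K} {v : V}

theorem mem_iSup_inf_eigenspace_insert (hv : v ∈ W) (hμ : μ ∉ S)
    (h : f v - μ • v ∈ ⨆ ρ ∈ S, W ⊓ f.eigenspace ρ) :
    v ∈ ⨆ ρ ∈ insert μ S, W ⊓ f.eigenspace ρ := by
  have hle : ⨆ ρ ∈ S, W ⊓ f.eigenspace ρ ≤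
      (⨆ ρ ∈ S, W ⊓ f.eigenspace ρ).map (f - algebraMap K (Module.End K V) μ) := by
    refine iSup₂_le fun ρ hρ w hw => ⟨(ρ - μ)⁻¹ • w,
      Submodule.smul_mem _ _ (le_biSup (fun ρ => W ⊓ f.eigenspace ρ) hρ hw), ?_⟩
    have hne : ρ - μ ≠ 0 := sub_ne_zero.mpr (ne_of_mem_of_not_mem hρ hμ)
    rw [LinearMap.sub_apply, map_smul, Module.End.mem_eigenspace_iff.mp hw.2,
      Module.algebraMap_end_apply, smul_comm μ, ← smul_sub, ← sub_smul, inv_smul_smul₀ hne]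
  obtain ⟨u, hu, hfu⟩ := hle h
  have huW : u ∈ W := (iSup₂_le fun _ _ => inf_le_left : ⨆ ρ ∈ S, W ⊓ f.eigenspace ρ ≤ W) hu
  have hsub : v - u ∈ f.eigenspace μ := by
    rw [LinearMap.sub_apply, Module.algebraMap_end_apply] at hfu
    rw [Module.End.mem_eigenspace_iff, map_sub, smul_sub, sub_eq_sub_iff_sub_eq_sub, hfu]
  rw [iSup_insert, ← sub_add_cancel v u]
  exact Submodule.add_mem_sup ⟨W.sub_mem hv huW, hsub⟩ hu

theorem mem_iSup_eigenspace_insert (hμ : μ ∉ S) (h : f v - μ • v ∈ ⨆ ρ ∈ S, f.eigenspace ρ) :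
    v ∈ ⨆ ρ ∈ insert μ S, f.eigenspace ρ := by
  simpa only [top_inf_eq] using mem_iSup_inf_eigenspace_insert (W := ⊤) Submodule.mem_top hμ
    (by simpa only [top_inf_eq] using h)

theorem eq_zero_of_mem_eigenspace_of_mem_iSup (hv : v ∈ f.eigenspace μ) (hμ : μ ∉ S)
    (h : v ∈ ⨆ ρ ∈ S, f.eigenspace ρ) : v = 0 :=
  Submodule.disjoint_def.mp (f.eigenspaces_iSupIndep.disjoint_biSup hμ) v hv h

theorem apply_eq_smul_of_mem_iSup_eigenspace (hv : v ∈ ⨆ ρ ∈ S, f.eigenspace ρ)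
    (h : f v - μ • v ∈ f.eigenspace μ) : f v = μ • v := by
  have hle : ⨆ ρ ∈ S, f.eigenspace ρ ≤
      (⨆ ρ ∈ S \ {μ}, f.eigenspace ρ).comap (f - algebraMap K (Module.End K V) μ) := by
    refine iSup₂_le fun ρ hρ w hw => ?_
    rw [Submodule.mem_comap, LinearMap.sub_apply, Module.algebraMap_end_apply,
      Module.End.mem_eigenspace_iff.mp hw, ← sub_smul]
    rcases eq_or_ne ρ μ with rfl | hne
    · simp
    · exact Submodule.smul_mem _ _ (le_biSup f.eigenspace (show ρ ∈ S \ {μ} from ⟨hρ, hne⟩) hw)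
  exact sub_eq_zero.mp (eq_zero_of_mem_eigenspace_of_mem_iSup h (by simp) (hle hv))

theorem le_comap_iSup_eigenspace (f : Module.End K V) (S : Set K) :
    ⨆ ρ ∈ S, f.eigenspace ρ ≤ (⨆ ρ ∈ S, f.eigenspace ρ).comap f :=
  iSup₂_le fun ρ hρ w hw => Submodule.mem_comap.mpr <| by
    rw [Module.End.mem_eigenspace_iff.mp hw]
    exact Submodule.smul_mem _ _ (le_biSup f.eigenspace hρ hw)

theorem mem_iSup_inf_eigenspace_of_finset (hW : ∀ w ∈ W, f w ∈ W) (R : Finset K) (hv : v ∈ W)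
    (h : v ∈ ⨆ ρ ∈ (R : Set K), f.eigenspace ρ) :
    v ∈ ⨆ ρ ∈ (R : Set K), W ⊓ f.eigenspace ρ := by
  induction R using Finset.induction_on generalizing v with
  | empty => simpa using h
  | insert μ R hμ ih =>
    rw [Finset.coe_insert, iSup_insert] at h
    obtain ⟨u, hu, w, hw, rfl⟩ := Submodule.mem_sup.mp h
    rw [Finset.coe_insert]
    refine mem_iSup_inf_eigenspace_insert hv hμ (ih (W.sub_mem (hW _ hv) (W.smul_mem _ hv)) ?_)
    rw [map_add, smul_add, Module.End.mem_eigenspace_iff.mp hu, add_sub_add_left_eq_sub]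
    exact Submodule.sub_mem _ (le_comap_iSup_eigenspace f R hw) (Submodule.smul_mem _ _ hw)

theorem le_iSup_inf_eigenspace (hW : ∀ w ∈ W, f w ∈ W) (h : W ≤ ⨆ ρ ∈ S, f.eigenspace ρ) :
    W ≤ ⨆ ρ ∈ S, W ⊓ f.eigenspace ρ := by
  intro v hv
  obtain ⟨R, hR⟩ := Submodule.mem_iSup_iff_exists_finset.mp (h hv)
  have hRS : v ∈ ⨆ ρ ∈ ((R.filter (· ∈ S) : Finset K) : Set K), f.eigenspace ρ := by
    simpa only [Finset.coe_filter, Set.mem_ofPred_eq, iSup_and] using hR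
  exact biSup_mono (p := (· ∈ ((R.filter (· ∈ S) : Finset K) : Set K)))
    (f := fun ρ => W ⊓ f.eigenspace ρ) (fun ρ hρ => (Finset.mem_filter.mp hρ).2)
    (mem_iSup_inf_eigenspace_of_finset hW _ hv hRS)

theorem mem_iSup_eigenspace_of_list_prod {l : List K} (hl : l.Nodup) (hS : ∀ μ ∈ l, μ ∉ S)
    (h : (l.map fun μ => f - algebraMap K (Module.End K V) μ).prod v ∈ ⨆ ρ ∈ S, f.eigenspace ρ) :
    v ∈ ⨆ ρ ∈ S ∪ {ρ | ρ ∈ l}, f.eigenspace ρ := by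
  induction l generalizing S with
  | nil => simpa using h
  | cons μ l ih =>
    rw [List.nodup_cons] at hl
    rw [List.map_cons, List.prod_cons, Module.End.mul_apply, LinearMap.sub_apply,
      Module.algebraMap_end_apply] at h
    have heq : S ∪ {ρ | ρ ∈ μ :: l} = insert μ S ∪ {ρ | ρ ∈ l} := by
      ext ρ
      simp only [Set.mem_union, Set.mem_insert_iff, Set.mem_ofPred_eq, List.mem_cons]
      tauto
    rw [heq]
    refine ih hl.2 (fun ν hν => ?_) (mem_iSup_eigenspace_insert (hS μ List.mem_cons_self) h)
    rintro (rfl | hνS)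
    exacts [hl.1 hν, hS ν (List.mem_cons_of_mem _ hν) hνS]

end Eigenspaces

/-! ## Weight spaces -/

section WeightSpace

variable {K V : Type*} [Field K] [AddCommGroup V] [Module K V] {L T : ℕ → Module.End K V}
  {m r k : ℕ} {w w' : ℕ → K} {v : V}

/-- The joint eigenspace of `L_0, …, L_{m-1}` for the eigenvalues `w_0, …, w_{m-1}`. -/
def weightSpace (L : ℕ → Module.End K V) (m : ℕ) (w : ℕ → K) : Submodule K V :=
  ⨅ k ∈ Set.Iio m, (L k).eigenspace (w k)

theorem mem_weightSpace : v ∈ weightSpace L m w ↔ ∀ k < m, L k v = w k • v := by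
  simp only [weightSpace, Submodule.mem_iInf, Module.End.mem_eigenspace_iff, Set.mem_Iio]

theorem weightSpace_anti (h : k ≤ m) : weightSpace L m w ≤ weightSpace L k w :=
  biInf_mono fun _ hj => lt_of_lt_of_le hj h

theorem weightSpace_congr (h : ∀ k < m, w k = w' k) : weightSpace L m w = weightSpace L m w' :=
  biInf_congr fun k hk => by rw [h k hk]

theorem weightSpace_succ :
    weightSpace L (m + 1) w = weightSpace L m w ⊓ (L m).eigenspace (w m) := by
  ext v
  simp only [Submodule.mem_inf, mem_weightSpace, Module.End.mem_eigenspace_iff,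
    Nat.forall_lt_succ_right]

theorem apply_mem_weightSpace {g : Module.End K V} (hg : ∀ k < m, Commute g (L k))
    (hv : v ∈ weightSpace L m w) : g v ∈ weightSpace L m w :=
  mem_weightSpace.mpr fun k hk => by
    rw [← Module.End.mul_apply, ← (hg k hk).eq, Module.End.mul_apply, mem_weightSpace.mp hv k hk,
      map_smul]

namespace HeckeRelations

variable {t : Kˣ} {n ℓ : ℕ} {κ : ℕ → ℤ} {a b : K} {x : ℤ}

theorem T_apply_mem_weightSpace (H : HeckeRelations t n ℓ κ L T) (hr : r + 1 < n) (hm : m ≤ r)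
    (hv : v ∈ weightSpace L m w) : T r v ∈ weightSpace L m w :=
  apply_mem_weightSpace
    (fun k hk => H.commute_T_L r k hr (by omega) (by omega) (by omega)) hv

theorem intertwiner_apply_mem_weightSpace (H : HeckeRelations t n ℓ κ L T) (hr : r + 1 < n)
    (hm : m ≤ r) (hv : v ∈ weightSpace L m w) : intertwiner L T r v ∈ weightSpace L m w :=
  apply_mem_weightSpace
    (fun k hk => (H.commute_L_intertwiner hr (by omega) (by omega) (by omega)).symm) hv

theorem L_intertwiner_apply (H : HeckeRelations t n ℓ κ L T) (hr : r + 1 < n)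
    (hb : L (r + 1) v = b • v) : L r (intertwiner L T r v) = b • intertwiner L T r v := by
  rw [← Module.End.mul_apply, H.L_mul_intertwiner hr, Module.End.mul_apply, hb, map_smul]

theorem L_succ_intertwiner_apply (H : HeckeRelations t n ℓ κ L T) (hr : r + 1 < n)
    (ha : L r v = a • v) : L (r + 1) (intertwiner L T r v) = a • intertwiner L T r v := by
  rw [← Module.End.mul_apply, H.L_succ_mul_intertwiner hr, Module.End.mul_apply, ha, map_smul]

theorem intertwiner_apply_mem_weightSpace_swap (H : HeckeRelations t n ℓ κ L T) (hr : r + 1 < m)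
    (hm : m ≤ n) (hv : v ∈ weightSpace L m w) :
    intertwiner L T r v ∈ weightSpace L m (w ∘ Equiv.swap r (r + 1)) := by
  have hr' : r + 1 < n := by omega
  rw [mem_weightSpace] at hv ⊢
  intro k hk
  rw [Function.comp_apply]
  rcases eq_or_ne k r with rfl | h₁
  · rw [Equiv.swap_apply_left]
    exact H.L_intertwiner_apply hr' (hv _ hr)
  rcases eq_or_ne k (r + 1) with rfl | h₂
  · rw [Equiv.swap_apply_right]
    exact H.L_succ_intertwiner_apply hr' (hv r (by omega))
  · rw [Equiv.swap_apply_of_ne_of_ne h₁ h₂, ← Module.End.mul_apply,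
      (H.commute_L_intertwiner hr' (by omega) h₁ h₂).eq, Module.End.mul_apply, hv k hk, map_smul]

theorem intertwiner_apply (H : HeckeRelations t n ℓ κ L T) (hr : r + 1 < n)
    (ha : L r v = a • v) (hb : L (r + 1) v = b • v) :
    intertwiner L T r v = (a - b) • T r v + (((t : K) - 1) * b + 1) • v := by
  simp only [H.intertwiner_eq hr, LinearMap.add_apply, LinearMap.sub_apply, Module.End.mul_apply,
    Module.End.one_apply, Module.algebraMap_end_apply, ha, hb, map_sub, map_smul]
  module

theorem intertwiner_intertwiner_apply (H : HeckeRelations t n ℓ κ L T) (hr : r + 1 < n)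
    (ha : L r v = qint (t : K) x • v) :
    intertwiner L T r (intertwiner L T r v) =
      (t : K) • ((qint (t : K) (x + 1) • (L (r + 1) v - qint (t : K) (x - 1) • v)) -
        L (r + 1) (L (r + 1) v - qint (t : K) (x - 1) • v)) := by
  have hx : qint (t : K) x = t * qint (t : K) (x - 1) + 1 := by
    rw [← qint_add_one_eq_mul_add t.ne_zero, sub_add_cancel]
  have hcomm : L r (L (r + 1) v) = qint (t : K) x • L (r + 1) v := by
    rw [← Module.End.mul_apply, (H.commute_L r (r + 1) (by omega) hr).eq, Module.End.mul_apply, ha,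
      map_smul]
  rw [← Module.End.mul_apply, H.intertwiner_mul_self hr]
  simp only [LinearMap.add_apply, LinearMap.sub_apply, Module.End.mul_apply, Module.End.one_apply,
    Module.algebraMap_end_apply, ha, hcomm, map_sub, map_add, map_smul,
    qint_add_one_eq_mul_add t.ne_zero x]
  rw [hx]
  module

theorem T_apply_eq_smul (H : HeckeRelations t n ℓ κ L T) (hr : r + 1 < n)
    (ha : L r v = qint (t : K) x • v) (hb : L (r + 1) v = qint (t : K) (x + 1) • v)
    (hM : intertwiner L T r v = 0) : T r v = (t : K) • v := by
  have ht : (t : K) ^ x ≠ 0 := zpow_ne_zero x t.ne_zero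
  rw [H.intertwiner_apply hr ha hb, sub_one_mul_qint_add_one t.ne_zero, qint_add_one,
    zpow_add_one₀ t.ne_zero] at hM
  refine smul_right_injective V ht (sub_eq_zero.mp ?_)
  rw [← neg_eq_zero, ← hM]
  module

theorem T_apply_eq_neg (H : HeckeRelations t n ℓ κ L T) (hr : r + 1 < n)
    (ha : L r v = qint (t : K) (x + 1) • v) (hb : L (r + 1) v = qint (t : K) x • v)
    (hM : intertwiner L T r v = 0) : T r v = -v := by
  have ht : (t : K) ^ x ≠ 0 := zpow_ne_zero x t.ne_zero
  rw [H.intertwiner_apply hr ha hb, sub_one_mul_qint_add_one t.ne_zero, qint_add_one,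
    add_sub_cancel_left, ← smul_add] at hM
  exact eq_neg_of_add_eq_zero_left ((smul_eq_zero_iff_right ht).mp hM)

theorem smul_eq_zero_of_T_apply (H : HeckeRelations t n ℓ κ L T) (hr : r + 2 < n)
    (ha : T r v = a • v) (hb : T (r + 1) v = b • v) : (a * b * (a - b)) • v = 0 := by
  have hbraid := LinearMap.congr_fun (H.braid r hr) v
  simp only [Module.End.mul_apply, ha, hb, map_smul, smul_smul] at hbraid
  rw [← sub_eq_zero, ← sub_smul] at hbraid
  rwa [show a * b * (a - b) = a * (b * a) - b * (a * b) by ring]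

theorem eq_zero_of_eigenvalues_eq {S : Set K} (H : HeckeRelations t n ℓ κ L T) (hr : r + 1 < n)
    (ha : L r v = qint (t : K) x • v) (hb : L (r + 1) v = qint (t : K) x • v)
    (hT : T r v ∈ ⨆ ρ ∈ S, (L r).eigenspace ρ) : v = 0 := by
  have ht : (t : K) ^ x ≠ 0 := zpow_ne_zero x t.ne_zero
  have hcomm : L r (T r v) - qint (t : K) x • T r v = -((t : K) ^ x • v) := by
    have := LinearMap.congr_fun (H.T_mul_L_succ hr) v
    simp only [LinearMap.add_apply, LinearMap.sub_apply, Module.End.mul_apply, Module.End.one_apply,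
      Module.algebraMap_end_apply, hb, map_smul] at this
    rw [this, ← sub_one_mul_qint_add_one t.ne_zero]
    module
  have heigen := apply_eq_smul_of_mem_iSup_eigenspace hT (μ := qint (t : K) x) <| by
    rw [hcomm]
    exact neg_mem (Submodule.smul_mem _ _ (Module.End.mem_eigenspace_iff.mpr ha))
  rw [heigen, sub_self, zero_eq_neg] at hcomm
  exact (smul_eq_zero_iff_right ht).mp hcomm

end HeckeRelations
end WeightSpace

/-! ## Branching -/

section Branching

variable {K V : Type*} [Field K] [AddCommGroup V] [Module K V] {L T : ℕ → Module.End K V}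
  {t : Kˣ} {n ℓ : ℕ} {κ : ℕ → ℤ} {m r k : ℕ} {s : ℕ → Node} {v : V} {δ : ℤ}

/-- The sequence of quantum contents of the nodes of a path. -/
noncomputable def pathWeight {K : Type*} [Field K] (t : Kˣ) (κ : ℕ → ℤ) (s : ℕ → Node)
    (k : ℕ) : K :=
  qint (t : K) (nodeContent κ (s k))

/-- The quantum contents of the addable nodes of the diagram `S`. -/
def addableWeights {K : Type*} [Field K] (t : Kˣ) (ℓ : ℕ) (κ : ℕ → ℤ) (S : Set Node) : Set K :=
  (fun B => qint (t : K) (nodeContent κ B)) '' {B | Addable ℓ S B}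

/-- The branching rule at level `m`: on the weight space of a standard path of length `m`, the
endomorphism `L_m` is diagonalisable, with the quantum contents of the addable nodes as its only
possible eigenvalues. -/
def Branches (t : Kˣ) (ℓ : ℕ) (κ : ℕ → ℤ) (L : ℕ → Module.End K V) (m : ℕ) : Prop :=
  ∀ s, IsStdPath ℓ m s → weightSpace L m (pathWeight t κ s) ≤
    ⨆ ρ ∈ addableWeights t ℓ κ (s '' Set.Iio m), (L m).eigenspace ρ

theorem pathWeight_comp (t : Kˣ) (κ : ℕ → ℤ) (s : ℕ → Node) (σ : ℕ → ℕ) :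
    pathWeight t κ s ∘ σ = pathWeight t κ (s ∘ σ) := rfl

theorem Blocks.swap (h : Blocks s k m δ) (hk : k + 1 < m) :
    Blocks (s ∘ Equiv.swap k (k + 1)) (k + 1) m δ := by
  have hm : Equiv.swap k (k + 1) m = m := Equiv.swap_apply_of_ne_of_ne (by omega) (by omega)
  refine ⟨hk, ?_, ?_, fun j hkj hjm => ?_⟩
  · rw [Function.comp_apply, Function.comp_apply, Equiv.swap_apply_right, hm, h.comp_eq]
  · rw [Function.comp_apply, Function.comp_apply, Equiv.swap_apply_right, hm, h.diag_eq]
  · rw [Function.comp_apply, Function.comp_apply, Equiv.swap_apply_right,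
      Equiv.swap_apply_of_ne_of_ne (by omega) (by omega)]
    exact h.one_lt_abs j (by omega) hjm

namespace HeckeRelations

theorem intertwiner_apply_eq_zero (H : HeckeRelations t n ℓ κ L T) (hsep : SeparatesF t n ℓ κ)
    (hbranch : Branches t ℓ κ L r) (hs : IsStdPath ℓ (r + 1) s) (hr : r + 1 < n)
    (hδ : δ = 1 ∨ δ = -1) (hv : v ∈ weightSpace L r (pathWeight t κ s))
    (heigen : L (r + 1) v = qint (t : K) (nodeContent κ (s r) + δ) • v) :
    intertwiner L T r v = 0 := by
  refine eq_zero_of_mem_eigenspace_of_mem_iSup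
    (Module.End.mem_eigenspace_iff.mpr (H.L_intertwiner_apply hr heigen)) ?_
    (hbranch s (hs.mono r.le_succ) (H.intertwiner_apply_mem_weightSpace hr le_rfl hv))
  rintro ⟨B, hB, heq⟩
  have hcard := ncard_image_Iio_le s r
  exact hsep.qint_addable_ne (hs.isDiagramSet r.le_succ) hB (hs r r.lt_succ_self) (by omega) hδ heq

theorem eq_zero_of_adjacent (H : HeckeRelations t n ℓ κ L T) (hsep : SeparatesF t n ℓ κ)
    (hr : r + 2 < n) {x : ℤ} (hδ : δ = 1 ∨ δ = -1)
    (h₀ : L r v = qint (t : K) (x + δ) • v) (h₁ : L (r + 1) v = qint (t : K) x • v)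
    (h₂ : L (r + 2) v = qint (t : K) (x + δ) • v)
    (hM₀ : intertwiner L T r v = 0) (hM₁ : intertwiner L T (r + 1) v = 0) : v = 0 := by
  have ht : (t : K) ≠ 0 := t.ne_zero
  have htwo : (t : K) + 1 ≠ 0 := by
    have := hsep.qint_ne_zero (d := 2) two_ne_zero (by rw [abs_two]; omega)
    rwa [show (2 : ℤ) = 1 + 1 from rfl, qint_add_one_eq_mul_add ht, qint_one, mul_one] at this
  have hr' : r + 1 < n := by omega
  rcases hδ with rfl | rfl
  · have hT₀ := H.T_apply_eq_neg hr' h₀ h₁ hM₀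
    have hT₁ := H.T_apply_eq_smul hr h₁ h₂ hM₁
    have := H.smul_eq_zero_of_T_apply hr (a := -1) (by rwa [neg_one_smul]) hT₁
    refine (smul_eq_zero_iff_right ?_).mp this
    rw [show -1 * (t : K) * (-1 - t) = t * (t + 1) by ring]
    exact mul_ne_zero ht htwo
  · obtain ⟨y, rfl⟩ : ∃ y, x = y + 1 := ⟨x - 1, by ring⟩
    rw [add_neg_cancel_right] at h₀ h₂
    have hT₀ := H.T_apply_eq_smul hr' h₀ h₁ hM₀
    have hT₁ := H.T_apply_eq_neg hr h₁ h₂ hM₁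
    have := H.smul_eq_zero_of_T_apply hr (b := -1) hT₀ (by rwa [neg_one_smul])
    refine (smul_eq_zero_iff_right ?_).mp this
    rw [show (t : K) * -1 * (t - -1) = -(t * (t + 1)) by ring]
    exact neg_ne_zero.mpr (mul_ne_zero ht htwo)

theorem eq_zero_of_intertwiner_apply_eq_zero (H : HeckeRelations t n ℓ κ L T)
    (hsep : SeparatesF t n ℓ κ) (hs : IsStdPath ℓ (r + 2) s) (hr : r + 1 < n)
    (hv : v ∈ weightSpace L (r + 2) (pathWeight t κ s))
    (hne : (s (r + 1)).1 = (s r).1 → 1 < |diag (s (r + 1)) - diag (s r)|)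
    (hM : intertwiner L T r v = 0) : v = 0 := by
  have hcard := ncard_image_Iio_le s (r + 2)
  have hweight (δ : ℤ) (hδ : |δ| = 1) : qint (t : K) (nodeContent κ (s (r + 1))) ≠
      qint (t : K) (nodeContent κ (s r) + δ) := fun heq => by
    obtain ⟨hcomp, hdiag⟩ := hsep.comp_eq_and_diag_eq_of_mem (hs.isDiagramSet le_rfl)
      ⟨r + 1, by simp, rfl⟩ ⟨r, by simp, rfl⟩ (by omega) heq
    have := hne hcomp
    rw [hdiag, add_sub_cancel_left] at this
    omega
  rw [mem_weightSpace] at hv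
  have hMM := H.intertwiner_intertwiner_apply hr (hv r (by omega))
  rw [hM, map_zero, hv (r + 1) (by omega), ← sub_smul, map_smul, hv (r + 1) (by omega),
    smul_comm, ← smul_sub, ← sub_smul, smul_smul, smul_smul, eq_comm] at hMM
  refine (smul_eq_zero_iff_right ?_).mp hMM
  exact mul_ne_zero (mul_ne_zero t.ne_zero (sub_ne_zero.mpr (hweight (-1) rfl)))
    (sub_ne_zero.mpr (hweight 1 rfl).symm)

theorem eq_zero_of_blocks_succ (H : HeckeRelations t n ℓ κ L T) (hsep : SeparatesF t n ℓ κ)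
    (hbranch : ∀ j ≤ r + 1, Branches t ℓ κ L j) (hs : IsStdPath ℓ (r + 2) s) (hr : r + 2 < n)
    (hδ : δ = 1 ∨ δ = -1) (hblocks : Blocks s r (r + 1) δ)
    (hv : v ∈ weightSpace L (r + 2) (pathWeight t κ s))
    (heigen : L (r + 2) v = qint (t : K) (nodeContent κ (s (r + 1)) + δ) • v) : v = 0 := by
  have hr' : r + 1 < n := by omega
  have hcontent := nodeContent_eq_add (κ := κ) hblocks.comp_eq hblocks.diag_eq
  have h₀ := mem_weightSpace.mp hv r (by omega)
  have h₁ := mem_weightSpace.mp hv (r + 1) (by omega)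
  rw [pathWeight] at h₀ h₁
  have hM₀ : intertwiner L T r v = 0 :=
    H.intertwiner_apply_eq_zero hsep (hbranch r (by omega)) (hs.mono (by omega)) hr'
      (δ := -δ) (by omega) (weightSpace_anti (by omega) hv)
      (by rwa [hcontent, add_neg_cancel_right])
  have hM₁ : intertwiner L T (r + 1) v = 0 :=
    H.intertwiner_apply_eq_zero hsep (hbranch (r + 1) le_rfl) hs hr hδ
      (weightSpace_anti (by omega) hv) heigen
  exact H.eq_zero_of_adjacent hsep hr hδ (hcontent ▸ h₀) h₁ heigen hM₀ hM₁

/-- Interchanging adjacent terms of the path moves the blocking node next to the last one. -/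
theorem eq_zero_of_blocks (H : HeckeRelations t n ℓ κ L T) (hsep : SeparatesF t n ℓ κ)
    (hbranch : ∀ j ≤ m, Branches t ℓ κ L j) (hs : IsStdPath ℓ (m + 1) s) (hm : m + 1 < n)
    (hδ : δ = 1 ∨ δ = -1) (hblocks : Blocks s k m δ)
    (hv : v ∈ weightSpace L (m + 1) (pathWeight t κ s))
    (heigen : L (m + 1) v = qint (t : K) (nodeContent κ (s m) + δ) • v) : v = 0 := by
  obtain ⟨d, hd⟩ := Nat.exists_eq_add_of_lt hblocks.lt
  induction d generalizing s k v with
  | zero =>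
    obtain rfl : m = k + 1 := hd
    exact H.eq_zero_of_blocks_succ hsep hbranch hs hm hδ hblocks hv heigen
  | succ d ih =>
    have hfar := hblocks.one_lt_abs (k + 1) (by omega) (by omega)
    have hadd : Addable ℓ (s '' Set.Iio k) (s (k + 1)) := by
      refine (hs.addable_or_adjacent (by omega)).resolve_right fun ⟨hcomp, hdiag⟩ => ?_
      have := lt_abs.mp (hfar hcomp)
      omega
    have hlast : s m = (s ∘ Equiv.swap k (k + 1)) m := by
      rw [Function.comp_apply, Equiv.swap_apply_of_ne_of_ne (by omega) (by omega)]
    refine H.eq_zero_of_intertwiner_apply_eq_zero hsep (hs.mono (by omega)) (by omega)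
      (weightSpace_anti (by omega) hv) hfar ?_
    have hswap := H.intertwiner_apply_mem_weightSpace_swap (show k + 1 < m + 1 by omega) hm.le hv
    rw [pathWeight_comp] at hswap
    refine ih (hs.swap (by omega) hadd) (hblocks.swap (by omega)) hswap ?_ (by omega)
    rw [← hlast, ← Module.End.mul_apply, (H.commute_L_intertwiner (by omega) hm (by omega)
      (by omega)).eq, Module.End.mul_apply, heigen, map_smul]

end HeckeRelations
end Branching

section BranchingRule

variable {K V : Type*} [Field K] [AddCommGroup V] [Module K V] {L T : ℕ → Module.End K V}
  {t : Kˣ} {n ℓ : ℕ} {κ : ℕ → ℤ} {m : ℕ} {s : ℕ → Node} {v : V} {ρ : K}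

namespace HeckeRelations

theorem branches_zero (H : HeckeRelations t n ℓ κ L T) (hsep : SeparatesF t n ℓ κ) (hn : 0 < n) :
    Branches t ℓ κ L 0 := by
  intro s hs v _
  have hcyc := H.cyclotomic hn
  set l := (List.range ℓ).map fun i => qint (t : K) (κ i) with hl
  rw [← Function.comp_def (fun μ => L 0 - algebraMap K (Module.End K V) μ), ← List.map_map, ← hl]
    at hcyc
  have hnodup : l.Nodup := by
    refine List.nodup_range.map_on fun i hi j hj heq => ?_
    by_contra hij
    refine hsep.qint_sub_add_ne_zero (List.mem_range.mp hi) (List.mem_range.mp hj) hij (d := 0)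
      (by rw [abs_zero]; omega) ?_
    rwa [add_zero, ← qint_eq_qint_iff t.ne_zero]
  have hmem := mem_iSup_eigenspace_of_list_prod (f := L 0) (S := ∅) (v := v) hnodup (by simp)
    (by simp [hcyc])
  refine biSup_mono (p := (· ∈ ∅ ∪ {ρ | ρ ∈ l})) (f := (L 0).eigenspace) (fun μ hμ => ?_) hmem
  obtain ⟨i, hi, rfl⟩ := List.mem_map.mp (hμ.resolve_left (Set.notMem_empty μ))
  refine ⟨(i, 0, 0), ?_, by simp [nodeContent]⟩
  refine (addable_iff (hs.isDiagramSet le_rfl)).mpr ⟨by simp, List.mem_range.mp hi, ?_, ?_⟩ <;>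
    intro j hj <;> cases hj

/-- If `a = [x]` is the eigenvalue of `L_m` on `v`, then `M_m² v` is a multiple of
`(L_{m+1} - [x+1]) (L_{m+1} - [x-1]) v`, while `L_{m+1}` acts on the image of `M_m` as `L_m` acts
on its source. -/
theorem weightSpace_succ_le (H : HeckeRelations t n ℓ κ L T) (hsep : SeparatesF t n ℓ κ)
    (hbranch : Branches t ℓ κ L m) (hs : IsStdPath ℓ (m + 1) s) (hm : m + 1 < n) :
    weightSpace L (m + 1) (pathWeight t κ s) ≤
      ⨆ ρ ∈ insert (qint (t : K) (nodeContent κ (s m) - 1))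
        (insert (qint (t : K) (nodeContent κ (s m) + 1)) (addableWeights t ℓ κ (s '' Set.Iio m))),
        (L (m + 1)).eigenspace ρ := by
  intro v hv
  set R := addableWeights t ℓ κ (s '' Set.Iio m)
  set x := nodeContent κ (s m)
  have hcard := ncard_image_Iio_le s m
  have hnotMem (δ : ℤ) (hδ : δ = 1 ∨ δ = -1) : qint (t : K) (x + δ) ∉ R := fun ⟨B, hB, heq⟩ =>
    hsep.qint_addable_ne (hs.isDiagramSet m.le_succ) hB (hs m m.lt_succ_self) (by omega) hδ heq
  have hne : qint (t : K) (x - 1) ≠ qint (t : K) (x + 1) := by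
    rw [Ne, qint_eq_qint_iff t.ne_zero]
    exact hsep.qint_ne_zero (by omega) (by rw [abs_of_neg] <;> omega)
  have hMv : intertwiner L T m v ∈ ⨆ ρ ∈ R, (L m).eigenspace ρ :=
    hbranch s (hs.mono m.le_succ)
      (H.intertwiner_apply_mem_weightSpace hm le_rfl (weightSpace_anti m.le_succ hv))
  have hmap : ⨆ ρ ∈ R, (L m).eigenspace ρ ≤
      (⨆ ρ ∈ R, (L (m + 1)).eigenspace ρ).comap (intertwiner L T m) :=
    iSup₂_le fun ρ hρ u hu => le_biSup (L (m + 1)).eigenspace hρ <|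
      Module.End.mem_eigenspace_iff.mpr
        (H.L_succ_intertwiner_apply hm (Module.End.mem_eigenspace_iff.mp hu))
  have hMMv := hmap hMv
  have ha : L m v = qint (t : K) x • v := mem_weightSpace.mp hv m m.lt_succ_self
  rw [Submodule.mem_comap, H.intertwiner_intertwiner_apply hm ha,
    Submodule.smul_mem_iff _ t.ne_zero, ← neg_mem_iff, neg_sub] at hMMv
  refine mem_iSup_eigenspace_insert ?_ (mem_iSup_eigenspace_insert (hnotMem 1 (.inl rfl)) hMMv)
  rintro (heq | hmem)
  exacts [hne heq, hnotMem (-1) (.inr rfl) hmem]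

theorem weightSpace_inf_eigenspace_le_of_adjacent (H : HeckeRelations t n ℓ κ L T)
    (hsep : SeparatesF t n ℓ κ) (hbranch : ∀ j ≤ m, Branches t ℓ κ L j)
    (hs : IsStdPath ℓ (m + 1) s) (hm : m + 1 < n) {δ : ℤ} (hδ : δ = 1 ∨ δ = -1)
    (hρ : ρ = qint (t : K) (nodeContent κ (s m) + δ)) :
    weightSpace L (m + 1) (pathWeight t κ s) ⊓ (L (m + 1)).eigenspace ρ ≤
      ⨆ ρ ∈ addableWeights t ℓ κ (s '' Set.Iio (m + 1)), (L (m + 1)).eigenspace ρ := by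
  rintro v ⟨hv, heigen⟩
  by_cases hadd : ∃ B, Addable ℓ (s '' Set.Iio (m + 1)) B ∧ B.1 = (s m).1 ∧
      diag B = diag (s m) + δ
  · obtain ⟨B, hB, hcomp, hdiag⟩ := hadd
    exact le_biSup (L (m + 1)).eigenspace
      (show ρ ∈ addableWeights t ℓ κ _ from ⟨B, hB, by rw [hρ, ← nodeContent_eq_add hcomp hdiag]⟩)
      heigen
  · obtain ⟨k, hblocks⟩ := hs.exists_blocks hδ fun B hB hcomp hdiag => hadd ⟨B, hB, hcomp, hdiag⟩
    rw [H.eq_zero_of_blocks hsep hbranch hs hm hδ hblocks hv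
      (hρ ▸ Module.End.mem_eigenspace_iff.mp heigen)]
    exact zero_mem _

theorem weightSpace_inf_eigenspace_le_of_addable (H : HeckeRelations t n ℓ κ L T)
    (hbranch : Branches t ℓ κ L m) (hs : IsStdPath ℓ (m + 1) s) (hm : m + 1 < n)
    (hρ : ρ ∈ addableWeights t ℓ κ (s '' Set.Iio m)) :
    weightSpace L (m + 1) (pathWeight t κ s) ⊓ (L (m + 1)).eigenspace ρ ≤
      ⨆ ρ ∈ addableWeights t ℓ κ (s '' Set.Iio (m + 1)), (L (m + 1)).eigenspace ρ := by
  rintro v ⟨hv, heigen⟩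
  obtain ⟨B, hB, rfl⟩ := hρ
  rcases eq_or_ne B (s m) with rfl | hne
  · rw [H.eq_zero_of_eigenvalues_eq hm (mem_weightSpace.mp hv m m.lt_succ_self)
      (Module.End.mem_eigenspace_iff.mp heigen) (hbranch s (hs.mono m.le_succ)
        (H.T_apply_mem_weightSpace hm le_rfl (weightSpace_anti m.le_succ hv)))]
    exact zero_mem _
  · refine le_biSup (L (m + 1)).eigenspace ?_ heigen
    rw [image_Iio_add_one]
    exact ⟨B, (hs m m.lt_succ_self).union_singleton hB hne.symm, rfl⟩

theorem branches_succ (H : HeckeRelations t n ℓ κ L T) (hsep : SeparatesF t n ℓ κ)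
    (hbranch : ∀ j ≤ m, Branches t ℓ κ L j) (hm : m + 1 < n) : Branches t ℓ κ L (m + 1) := by
  intro s hs
  have hinvariant (u) (hu : u ∈ weightSpace L (m + 1) (pathWeight t κ s)) :
      L (m + 1) u ∈ weightSpace L (m + 1) (pathWeight t κ s) :=
    apply_mem_weightSpace (fun k hk => H.commute_L _ _ hm (by omega)) hu
  refine (le_iSup_inf_eigenspace hinvariant
    (H.weightSpace_succ_le hsep (hbranch m le_rfl) hs hm)).trans (iSup₂_le ?_)
  rintro ρ (hρ | hρ | hρ)
  · exact H.weightSpace_inf_eigenspace_le_of_adjacent hsep hbranch hs hm (.inr rfl) hρ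
  · exact H.weightSpace_inf_eigenspace_le_of_adjacent hsep hbranch hs hm (.inl rfl) hρ
  · exact H.weightSpace_inf_eigenspace_le_of_addable (hbranch m le_rfl) hs hm hρ

theorem branches (H : HeckeRelations t n ℓ κ L T) (hsep : SeparatesF t n ℓ κ) (hm : m < n) :
    Branches t ℓ κ L m := by
  induction m using Nat.strong_induction_on with
  | _ m ih =>
    cases m with
    | zero => exact H.branches_zero hsep hm
    | succ m => exact H.branches_succ hsep (fun j hj => ih j (by omega) (by omega)) hm

theorem iSup_weightSpace_eq_top (H : HeckeRelations t n ℓ κ L T) (hsep : SeparatesF t n ℓ κ)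
    (hm : m ≤ n) :
    ⨆ s ∈ {s | IsStdPath ℓ m s}, weightSpace L m (pathWeight t κ s) = ⊤ := by
  rw [eq_top_iff]
  induction m with
  | zero =>
    refine le_trans (fun v _ => mem_weightSpace.mpr ?_)
      (le_biSup (fun s => weightSpace L 0 (pathWeight t κ s))
        (show (fun _ => (0, 0, 0)) ∈ {s | IsStdPath ℓ 0 s} from fun k hk => by omega))
    exact fun k hk => by omega
  | succ m ih =>
    refine (ih (by omega)).trans (iSup₂_le fun s hs => ?_)
    have hinvariant (u) (hu : u ∈ weightSpace L m (pathWeight t κ s)) :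
        L m u ∈ weightSpace L m (pathWeight t κ s) :=
      apply_mem_weightSpace (fun k hk => H.commute_L _ _ hm (by omega)) hu
    refine (le_iSup_inf_eigenspace hinvariant (H.branches hsep hm s hs)).trans (iSup₂_le ?_)
    rintro _ ⟨B, hB, rfl⟩
    have hweight (k : ℕ) (hk : k < m) :
        pathWeight t κ s k = pathWeight t κ (Function.update s m B) k := by
      simp only [pathWeight, Function.update_of_ne hk.ne]
    refine le_trans (le_of_eq ?_) (le_biSup (fun s => weightSpace L (m + 1) (pathWeight t κ s))
      (IsStdPath.update hs hB))
    simp only [weightSpace_succ, weightSpace_congr hweight, pathWeight, Function.update_self]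

end HeckeRelations
end BranchingRule

/-! ## Standard tableaux as paths -/

section TableauxAndPaths

variable {ℓ n : ℕ} {S : Set Node} {s : ℕ → Node}

theorem Multipartition.diagram_injective_s18 :
    Function.Injective (Multipartition.diagram (ℓ := ℓ) (n := n)) := by
  intro μ ν h
  have hpart : μ.part = ν.part := funext₂ fun l r => eq_of_forall_lt_iff fun c =>
    (Set.ext_iff.mp h (l, r, c) :)
  cases μ
  cases ν
  congr

namespace StdTableau

variable (T : StdTableau ℓ n)

theorem node_mem_diagram {k : ℕ} (hk : k ∈ Set.Icc 1 n) : T.node k ∈ T.shape.diagram :=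
  Function.invFunOn_mem (T.bijOn.surjOn hk)

theorem entry_node {k : ℕ} (hk : k ∈ Set.Icc 1 n) : T.entry (T.node k) = k :=
  Function.invFunOn_eq (T.bijOn.surjOn hk)

theorem node_entry {A : Node} (hA : A ∈ T.shape.diagram) : T.node (T.entry A) = A :=
  T.bijOn.injOn.leftInvOn_invFunOn hA

/-- The sequence of nodes of a tableau in the order of their entries. The `k`-th term is the node
with entry `k + 1`, so that the terms of index less than `n` are the meaningful ones. -/
noncomputable def path (k : ℕ) : Node := T.node (k + 1)

theorem content_eq_nodeContent_path (κ : ℕ → ℤ) (k : ℕ) :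
    content κ T (k + 1) = nodeContent κ (T.path k) := rfl

theorem path_mem_diagram {k : ℕ} (hk : k < n) : T.path k ∈ T.shape.diagram :=
  T.node_mem_diagram ⟨Nat.le_add_left 1 k, hk⟩

theorem entry_path {k : ℕ} (hk : k < n) : T.entry (T.path k) = k + 1 :=
  T.entry_node ⟨Nat.le_add_left 1 k, hk⟩

theorem image_path_Iio {k : ℕ} (hk : k ≤ n) : T.path '' Set.Iio k = restDiag T k := by
  ext A
  constructor
  · rintro ⟨j, hj, rfl⟩
    have hjk : j < k := hj
    exact ⟨T.path_mem_diagram (by omega), by rw [T.entry_path (by omega)]; exact hj⟩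
  · rintro ⟨hA, hle⟩
    have hpos : 1 ≤ T.entry A := (T.bijOn.mapsTo hA).1
    refine ⟨T.entry A - 1, show T.entry A - 1 < k by omega, ?_⟩
    rw [path, Nat.sub_add_cancel hpos, T.node_entry hA]

theorem image_path : T.path '' Set.Iio n = T.shape.diagram := by
  rw [T.image_path_Iio le_rfl]
  exact Set.sep_eq_self_iff_mem_true.mpr fun A hA => (T.bijOn.mapsTo hA).2

theorem isDiagramSet_restDiag (k : ℕ) : IsDiagramSet ℓ (restDiag T k) := by
  refine ⟨?_, ?_, ?_, ?_⟩
  · exact ((T.bijOn.finite_iff_finite).mpr (Set.finite_Icc 1 n)).subset fun A hA => hA.1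
  · rintro ⟨l, r, c⟩ ⟨hA, -⟩
    by_contra! hl
    exact Nat.not_lt_zero c ((T.shape.comp_bound l hl r).subst (motive := fun i => c < i) hA)
  · rintro l r c ⟨hA, hle⟩
    exact ⟨(Nat.lt_succ_self c).trans hA, (T.row_inc l r c hA).le.trans hle⟩
  · rintro l r c ⟨hA, hle⟩
    exact ⟨lt_of_lt_of_le hA (T.shape.antitone l (Nat.le_succ r)),
      (T.col_inc l r c hA).le.trans hle⟩

theorem isStdPath_path : IsStdPath ℓ n T.path := by
  intro k hk
  refine ⟨?_, ?_⟩
  · rw [T.image_path_Iio hk.le]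
    rintro ⟨-, hle⟩
    rw [T.entry_path hk] at hle
    omega
  · rw [← image_Iio_add_one, T.image_path_Iio hk]
    exact T.isDiagramSet_restDiag (k + 1)

theorem eq_of_path_eq {T T' : StdTableau ℓ n} (h : ∀ k < n, T.path k = T'.path k) : T = T' := by
  have hdiagram : T.shape.diagram = T'.shape.diagram := by
    rw [← image_path, ← image_path, image_Iio_congr le_rfl h]
  have hentry : T.entry = T'.entry := by
    funext A
    by_cases hA : A ∈ T.shape.diagram
    · rw [← image_path] at hA
      obtain ⟨k, hk, rfl⟩ := hA
      rw [T.entry_path hk, h k hk, T'.entry_path hk]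
    · rw [T.entry_zero A hA, T'.entry_zero A (hdiagram ▸ hA)]
  have hshape := Multipartition.diagram_injective_s18 hdiagram
  cases T
  cases T'
  congr

end StdTableau

/-- The length of row `r` of component `l` of a diagram. It is `0` if the diagram contains the whole
infinite row. -/
noncomputable def rowLength (S : Set Node) (l r : ℕ) : ℕ := sInf {c | (l, r, c) ∉ S}

theorem IsDiagramSet.lt_rowLength_iff (hS : IsDiagramSet ℓ S) {l r c : ℕ} :
    c < rowLength S l r ↔ (l, r, c) ∈ S := by
  constructor
  · intro h
    by_contra hc
    exact Nat.notMem_of_lt_sInf h hc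
  · intro h
    have hne : {c | (l, r, c) ∉ S}.Nonempty :=
      (hS.1.preimage (fun c _ d _ hcd => by simpa using hcd)).exists_notMem
    by_contra! hle
    exact Nat.sInf_mem hne (hS.mem_of_le h rfl le_rfl hle)

theorem IsDiagramSet.row_lt_ncard (hS : IsDiagramSet ℓ S) {A : Node} (hA : A ∈ S) :
    A.2.1 < S.ncard :=
  (Nat.le_add_left _ _).trans_lt (hS.col_add_row_lt_ncard hA hA rfl)

theorem IsDiagramSet.col_lt_ncard (hS : IsDiagramSet ℓ S) {A : Node} (hA : A ∈ S) :
    A.2.2 < S.ncard :=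
  (Nat.le_add_right _ _).trans_lt (hS.col_add_row_lt_ncard hA hA rfl)

theorem IsDiagramSet.sum_rowLength (hS : IsDiagramSet ℓ S) :
    ∑ l ∈ Finset.range ℓ, ∑ r ∈ Finset.range S.ncard, rowLength S l r = S.ncard := by
  have hmaps : ∀ A ∈ hS.1.toFinset, (A.1, A.2.1) ∈ Finset.range ℓ ×ˢ Finset.range S.ncard := by
    intro A hA
    rw [Set.Finite.mem_toFinset] at hA
    simpa using ⟨hS.2.1 A hA, hS.row_lt_ncard hA⟩
  refine Eq.trans ?_ (Set.ncard_eq_toFinset_card S hS.1).symm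
  rw [Finset.card_eq_sum_card_fiberwise hmaps, Finset.sum_product]
  refine Finset.sum_congr rfl fun l _ => Finset.sum_congr rfl fun r _ => ?_
  have hrow : hS.1.toFinset.filter (fun A => (A.1, A.2.1) = (l, r)) =
      (Finset.range (rowLength S l r)).image fun c => (l, r, c) := by
    ext ⟨l', r', c⟩
    simp only [Finset.mem_filter, Set.Finite.mem_toFinset, Finset.mem_image, Finset.mem_range,
      hS.lt_rowLength_iff, Prod.mk.injEq]
    aesop
  rw [hrow, Finset.card_image_of_injective _ fun c d hcd => by simpa using hcd, Finset.card_range]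

theorem IsDiagramSet.exists_diagram_eq (hS : IsDiagramSet ℓ S) (hn : S.ncard = n) :
    ∃ μ : Multipartition ℓ n, μ.diagram = S := by
  subst hn
  have hzero {l r : ℕ} (h : (l, r, 0) ∉ S) : rowLength S l r = 0 := by
    rwa [← hS.lt_rowLength_iff, Nat.pos_iff_ne_zero, not_not] at h
  exact ⟨{
    part := rowLength S
    comp_bound := fun l hl r => hzero fun h => hl.not_gt (hS.2.1 _ h)
    antitone := fun l => antitone_nat_of_succ_le fun r => le_of_forall_lt fun c hc =>
      hS.lt_rowLength_iff.mpr (hS.2.2.2 l r c (hS.lt_rowLength_iff.mp hc))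
    row_bound := fun l r hr => hzero fun h => hr.not_gt (hS.row_lt_ncard h)
    size := hS.sum_rowLength }, Set.ext fun _ => hS.lt_rowLength_iff⟩

/-- The entry of the node `A` in the tableau of the path formed by the first `n` terms of `s`. As in
`StdTableau.entry`, it is `0` if `A` is not on the path. -/
noncomputable def pathEntry (n : ℕ) (s : ℕ → Node) (A : Node) : ℕ :=
  if A ∈ s '' Set.Iio n then Function.invFunOn s (Set.Iio n) A + 1 else 0

namespace IsStdPath

theorem injOn (h : IsStdPath ℓ n s) : Set.InjOn s (Set.Iio n) := fun _ hj _ hk => h.index_eq hj hk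

theorem ncard_image (h : IsStdPath ℓ n s) : (s '' Set.Iio n).ncard = n := by
  rw [h.injOn.ncard_image, Set.ncard_Iio_nat]

theorem pathEntry_apply (h : IsStdPath ℓ n s) {k : ℕ} (hk : k ∈ Set.Iio n) :
    pathEntry n s (s k) = k + 1 := by
  rw [pathEntry, if_pos (Set.mem_image_of_mem s hk), h.injOn.leftInvOn_invFunOn hk]

theorem bijOn_pathEntry (h : IsStdPath ℓ n s) :
    Set.BijOn (pathEntry n s) (s '' Set.Iio n) (Set.Icc 1 n) := by
  have hsucc : Set.BijOn (· + 1) (Set.Iio n) (Set.Icc 1 n) :=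
    ⟨fun k hk => ⟨Nat.le_add_left 1 k, hk⟩, fun _ _ _ _ => Nat.succ.inj,
      fun k hk => ⟨k - 1, Nat.sub_one_lt_of_le hk.1 hk.2, Nat.sub_add_cancel hk.1⟩⟩
  exact (Set.bijOn_comp_iff h.injOn).mp (hsucc.congr fun k hk => (h.pathEntry_apply hk).symm)

theorem pathEntry_lt (h : IsStdPath ℓ n s) {A B : Node} (hB : B ∈ s '' Set.Iio n) (hne : A ≠ B)
    (hcomp : A.1 = B.1) (hrow : A.2.1 ≤ B.2.1) (hcol : A.2.2 ≤ B.2.2) :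
    pathEntry n s A < pathEntry n s B := by
  obtain ⟨j, hj, rfl⟩ := (h.isDiagramSet le_rfl).mem_of_le hB hcomp hrow hcol
  obtain ⟨k, hk, rfl⟩ := hB
  rw [h.pathEntry_apply hj, h.pathEntry_apply hk, Nat.add_lt_add_iff_right]
  exact lt_of_le_of_ne (h.le_of_le hj hk hcomp hrow hcol) fun hjk => hne (congrArg s hjk)

theorem exists_path_eq (h : IsStdPath ℓ n s) :
    ∃ T : StdTableau ℓ n, ∀ k < n, T.path k = s k := by
  obtain ⟨μ, hμ⟩ := (h.isDiagramSet le_rfl).exists_diagram_eq h.ncard_image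
  let T : StdTableau ℓ n := {
    shape := μ
    entry := pathEntry n s
    entry_zero := fun A hA => if_neg (hμ ▸ hA)
    bijOn := hμ.symm ▸ h.bijOn_pathEntry
    row_inc := fun l r c hA => h.pathEntry_lt (hμ ▸ hA) (by simp) rfl le_rfl (Nat.le_succ c)
    col_inc := fun l r c hA => h.pathEntry_lt (hμ ▸ hA) (by simp) rfl (Nat.le_succ r) le_rfl }
  refine ⟨T, fun k hk => T.bijOn.injOn (T.path_mem_diagram hk) ?_ ?_⟩
  · exact hμ ▸ Set.mem_image_of_mem s hk
  · exact (T.entry_path hk).trans (h.pathEntry_apply hk).symm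

end IsStdPath

namespace StdTableau

variable (T : StdTableau ℓ n) (κ : ℕ → ℤ)

theorem path_mem_box {k : ℕ} (hk : k < n) :
    T.path k ∈ Finset.range ℓ ×ˢ Finset.range n ×ˢ Finset.range n := by
  have hS := T.isStdPath_path.isDiagramSet le_rfl
  have hmem : T.path k ∈ T.path '' Set.Iio n := ⟨k, hk, rfl⟩
  have hrow := hS.row_lt_ncard hmem
  have hcol := hS.col_lt_ncard hmem
  rw [T.isStdPath_path.ncard_image] at hrow hcol
  simpa only [Finset.mem_product, Finset.mem_range] using ⟨hS.2.1 _ hmem, hrow, hcol⟩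

theorem content_mem_contFinset {k : ℕ} (hk : k < n) : content κ T (k + 1) ∈ contFinset ℓ n κ :=
  Finset.mem_filter.mpr ⟨Finset.mem_image_of_mem (nodeContent κ) (T.path_mem_box hk),
    T, k + 1, Nat.le_add_left 1 k, hk, rfl⟩

instance inst_s18 : Finite (StdTableau ℓ n) :=
  Finite.of_injective
    (fun (T : StdTableau ℓ n) (k : Fin n) =>
      (⟨T.path k, T.path_mem_box k.2⟩ : ↥(Finset.range ℓ ×ˢ Finset.range n ×ˢ Finset.range n)))
    fun _ _ h => eq_of_path_eq fun k hk => congrArg Subtype.val (congrFun h ⟨k, hk⟩)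

end StdTableau

end TableauxAndPaths

section TableauWeights

variable {K V : Type*} [Field K] [AddCommGroup V] [Module K V] {L T : ℕ → Module.End K V}
  {t : Kˣ} {n ℓ : ℕ} {κ : ℕ → ℤ}

/-- The joint eigenspace on which each `L_k` acts by the quantum content of its entry in the
tableau `U`. -/
noncomputable def tableauWeightSpace (t : Kˣ) (κ : ℕ → ℤ) (L : ℕ → Module.End K V)
    (U : StdTableau ℓ n) : Submodule K V :=
  weightSpace L n (pathWeight t κ U.path)

theorem HeckeRelations.iSup_tableauWeightSpace_eq_top (H : HeckeRelations t n ℓ κ L T)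
    (hsep : SeparatesF t n ℓ κ) : ⨆ U : StdTableau ℓ n, tableauWeightSpace t κ L U = ⊤ := by
  rw [eq_top_iff, ← H.iSup_weightSpace_eq_top hsep le_rfl]
  refine iSup₂_le fun s hs => ?_
  obtain ⟨U, hU⟩ := IsStdPath.exists_path_eq hs
  have hweight : ∀ k < n, pathWeight t κ s k = pathWeight t κ U.path k := fun k hk => by
    rw [pathWeight, pathWeight, hU k hk]
  rw [weightSpace_congr hweight]
  exact le_iSup (tableauWeightSpace t κ L) U

theorem swapSeq_eq_comp_swap {e : ℕ} (i : Fin n → ZMod e) (r : Fin (n - 1)) :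
    swapSeq i r = i ∘ Equiv.swap (pL r) (pR r) := by
  funext k
  rw [swapSeq, Function.comp_apply, Equiv.swap_apply_def]
  split_ifs <;> rfl

theorem swapSeq_injective {e : ℕ} (r : Fin (n - 1)) :
    Function.Injective fun i : Fin n → ZMod e => swapSeq i r := by
  simp only [swapSeq_eq_comp_swap]
  exact (Equiv.swap (pL r) (pR r)).surjective.injective_comp_right

theorem StdTableau.resSeq_eq_swapSeq (U : StdTableau ℓ n) {U' : StdTableau ℓ n} {r : Fin (n - 1)}
    (h : ∀ k < n, U'.path k = (U.path ∘ Equiv.swap r.1 (r.1 + 1)) k) (e : ℕ) :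
    resSeq e κ U' = swapSeq (resSeq e κ U) r := by
  rw [swapSeq_eq_comp_swap]
  funext k
  have hswap : (Equiv.swap (pL r) (pR r) k).1 = Equiv.swap r.1 (r.1 + 1) k.1 :=
    Fin.val_injective.map_swap (pL r) (pR r) k
  simp only [resSeq, Function.comp_apply, content_eq_nodeContent_path, h k k.2, hswap]

theorem HeckeRelations.intertwiner_apply_eq_zero_or_mem (H : HeckeRelations t n ℓ κ L T)
    (hsep : SeparatesF t n ℓ κ) (e : ℕ) (r : Fin (n - 1)) {U : StdTableau ℓ n} {v : V}
    (hv : v ∈ tableauWeightSpace t κ L U) :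
    intertwiner L T r v = 0 ∨ ∃ U' : StdTableau ℓ n,
      resSeq e κ U' = swapSeq (resSeq e κ U) r ∧
        intertwiner L T r v ∈ tableauWeightSpace t κ L U' := by
  have hr : r.1 + 1 < n := (pR r).2
  rcases U.isStdPath_path.addable_or_adjacent hr with hadd | ⟨hcomp, hdiag⟩
  · obtain ⟨U', hU'⟩ := (U.isStdPath_path.swap hr hadd).exists_path_eq
    refine Or.inr ⟨U', U.resSeq_eq_swapSeq hU' e, ?_⟩
    have hweight : ∀ k < n, pathWeight t κ U'.path k =
        (pathWeight t κ U.path ∘ Equiv.swap r.1 (r.1 + 1)) k := fun k hk => by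
      rw [pathWeight, hU' k hk, pathWeight_comp, pathWeight]
    rw [tableauWeightSpace, weightSpace_congr hweight]
    exact H.intertwiner_apply_mem_weightSpace_swap hr le_rfl hv
  · left
    obtain ⟨δ, hδ, hdiag⟩ : ∃ δ : ℤ, (δ = 1 ∨ δ = -1) ∧
        diag (U.path (r + 1)) = diag (U.path r) + δ := by
      rcases hdiag with h | h
      · exact ⟨1, Or.inl rfl, h⟩
      · exact ⟨-1, Or.inr rfl, h⟩
    have heigen := mem_weightSpace.mp hv (r + 1) hr
    rw [pathWeight, nodeContent_eq_add hcomp hdiag] at heigen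
    exact H.intertwiner_apply_eq_zero hsep (H.branches hsep (by omega))
      (U.isStdPath_path.mono hr.le) hr hδ (weightSpace_anti (by omega) hv) heigen

end TableauWeights

/-! ## The cyclotomic Hecke algebra -/

section Lagrange

variable {K A : Type*} [Field K] [Ring A] [Algebra K A]

/-- The value at `a` of the polynomial that is `1` at `x` and `0` at the other entries of `l`, in
the form in which it occurs in `Fidem`. -/
noncomputable def lagrange (l : List K) (x : K) (a : A) : A :=
  (l.map fun c =>
    if x ≠ c then (a - algebraMap K A c) * algebraMap K A (x - c)⁻¹ else 1).prod

theorem lagrange_self (l : List K) (x : K) : lagrange l x x = 1 := by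
  refine List.prod_eq_one fun y hy => ?_
  obtain ⟨c, -, rfl⟩ := List.mem_map.mp hy
  split_ifs with h
  · exact mul_inv_cancel₀ (sub_ne_zero.mpr h)
  · rfl

theorem lagrange_eq_zero {l : List K} {x y : K} (hy : y ∈ l) (hxy : x ≠ y) :
    lagrange l x y = 0 := by
  refine List.prod_eq_zero (List.mem_map.mpr ⟨y, hy, ?_⟩)
  rw [if_pos hxy, Algebra.algebraMap_self_apply, sub_self, zero_mul]

theorem list_prod_smul_eq {ι R M V : Type*} [Monoid M] [CommMonoid R] [MulAction M V]
    [MulAction R V] [SMulCommClass M R V] {f : ι → M} {g : ι → R} {v : V} {l : List ι}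
    (h : ∀ a ∈ l, f a • v = g a • v) : (l.map f).prod • v = (l.map g).prod • v := by
  induction l with
  | nil => simp
  | cons a l ih =>
    rw [List.forall_mem_cons] at h
    rw [List.map_cons, List.prod_cons, List.map_cons, List.prod_cons, mul_smul, ih h.2, smul_comm,
      h.1, smul_smul, mul_comm]

theorem lagrange_smul {l : List K} {x y : K} {a v : A} (h : a • v = y • v) :
    lagrange l x a • v = lagrange l x y • v := by
  refine list_prod_smul_eq fun c _ => ?_
  split_ifs
  · rw [mul_smul, algebraMap_smul, smul_comm, sub_smul, h, algebraMap_smul, ← sub_smul, smul_smul,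
      mul_comm]
    rfl
  · rw [one_smul, one_smul]

end Lagrange

section LeftMul

variable {K A : Type*} [Field K] [Ring A] [Algebra K A] {t : Kˣ} {n ℓ : ℕ} {κ : ℕ → ℤ}
  {L T : ℕ → A}

variable (K) in
/-- The family of left multiplications by the members of a family in an algebra. -/
def leftMul (L : ℕ → A) : ℕ → Module.End K A := Algebra.lmul K A ∘ L

theorem HeckeRelations.leftMul (H : HeckeRelations t n ℓ κ L T) :
    HeckeRelations t n ℓ κ (leftMul K L) (leftMul K T) := H.map (Algebra.lmul K A)

theorem intertwiner_leftMul (r : ℕ) (v : A) :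
    intertwiner (leftMul K L) (leftMul K T) r v = intertwiner L T r * v := by
  simp [intertwiner, leftMul, sub_mul, mul_assoc]

end LeftMul

section CyclotomicHecke

theorem mul_self_eq_of_add_one_mul_sub_eq_zero {A : Type*} [Ring A] {c T : A} (hcT : Commute c T)
    (h : (T + 1) * (T - c) = 0) : T * T = (c - 1) * T + c := by
  linear_combination (norm := noncomm_ring) h - hcT.eq

theorem mul_eq_of_mul_sub_add_one_eq {A : Type*} [Ring A] {c X Y T : A} (hcY : Commute c Y)
    (h : Y * (T - c + 1) = T * X + 1) : Y * T = T * X + 1 + (c - 1) * Y := by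
  linear_combination (norm := noncomm_ring) h - hcY.eq

variable (K : Type*) [Field K] (t : Kˣ) (n ℓ : ℕ) (κ : ℕ → ℤ)

/-- The generators `L_0, L_1, …` of the cyclotomic Hecke algebra, continued by `0`. -/
noncomputable def genL : ℕ → CycHecke K t n ℓ κ := Function.extend Fin.val (Lgen K t n ℓ κ) 0

/-- The generators `T_0, T_1, …` of the cyclotomic Hecke algebra, continued by `0`. -/
noncomputable def genT : ℕ → CycHecke K t n ℓ κ := Function.extend Fin.val (Tgen K t n ℓ κ) 0

variable {K t n ℓ κ}

theorem genL_val (k : Fin n) : genL K t n ℓ κ k = Lgen K t n ℓ κ k :=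
  Fin.val_injective.extend_apply _ _ k

theorem genT_val (r : Fin (n - 1)) : genT K t n ℓ κ r = Tgen K t n ℓ κ r :=
  Fin.val_injective.extend_apply _ _ r

theorem mkAlgHom_hL (k : Fin n) :
    RingQuot.mkAlgHom K (HeckeRel K t n ℓ κ) (hL K k) = genL K t n ℓ κ k := (genL_val k).symm

theorem mkAlgHom_hT (r : Fin (n - 1)) :
    RingQuot.mkAlgHom K (HeckeRel K t n ℓ κ) (hT K r) = genT K t n ℓ κ r := (genT_val r).symm

theorem heckeRelations_gen : HeckeRelations t n ℓ κ (genL K t n ℓ κ) (genT K t n ℓ κ) where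
  cyclotomic hn := by
    have h := RingQuot.mkAlgHom_rel K (HeckeRel.cyc (t := t) (ℓ := ℓ) (κ := κ) hn)
    simpa only [map_zero, map_list_prod, List.map_map, Function.comp_def, map_sub, mkAlgHom_hL,
      AlgHom.commutes, qintU_eq_qint] using h
  quadratic r hr := by
    have h := RingQuot.mkAlgHom_rel K
      (HeckeRel.quad (t := t) (ℓ := ℓ) (κ := κ) (⟨r, by omega⟩ : Fin (n - 1)))
    simp only [map_zero, map_mul, map_add, map_sub, map_one, mkAlgHom_hT, AlgHom.commutes] at h
    exact mul_self_eq_of_add_one_mul_sub_eq_zero (Algebra.commutes _ _) h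
  commute_L j k hj hk := by
    have h := RingQuot.mkAlgHom_rel K
      (HeckeRel.LL (t := t) (ℓ := ℓ) (κ := κ) (⟨j, hj⟩ : Fin n) ⟨k, hk⟩)
    simpa only [commute_iff_eq, map_mul, mkAlgHom_hL] using h
  braid r hr := by
    have h := RingQuot.mkAlgHom_rel K
      (HeckeRel.braid (t := t) (ℓ := ℓ) (κ := κ) (⟨r, by omega⟩ : Fin (n - 1))
        ⟨r + 1, by omega⟩ rfl)
    simpa only [map_mul, mkAlgHom_hT] using h
  commute_T_L r k hr hk h₁ h₂ := by
    have h := RingQuot.mkAlgHom_rel K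
      (HeckeRel.TL (t := t) (ℓ := ℓ) (κ := κ) ⟨r, by omega⟩ (⟨k, hk⟩ : Fin n) ⟨h₁, h₂⟩)
    simpa only [commute_iff_eq, map_mul, mkAlgHom_hT, mkAlgHom_hL] using h
  L_mul_T r hr := by
    have h := RingQuot.mkAlgHom_rel K
      (HeckeRel.LT (t := t) (ℓ := ℓ) (κ := κ) (⟨r, by omega⟩ : Fin (n - 1)))
    simp only [map_mul, map_add, map_sub, map_one, mkAlgHom_hT, mkAlgHom_hL, AlgHom.commutes,
      pL, pR] at h
    exact mul_eq_of_mul_sub_add_one_eq (Algebra.commutes _ _) h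

variable {U W : StdTableau ℓ n} {v : CycHecke K t n ℓ κ}

theorem Lgen_smul_of_mem (hv : v ∈ tableauWeightSpace t κ (leftMul K (genL K t n ℓ κ)) U)
    (k : Fin n) : Lgen K t n ℓ κ k • v = qint (t : K) (content κ U (k + 1)) • v := by
  rw [← genL_val]
  exact mem_weightSpace.mp hv k k.2

theorem Fidem_eq_prod_lagrange :
    Fidem K t n ℓ κ U = ((List.finRange n).map fun k : Fin n =>
      lagrange (((contFinset ℓ n κ).sort (· ≤ ·)).map (qint (t : K)))
        (qint (t : K) (content κ U (k + 1))) (Lgen K t n ℓ κ k)).prod := by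
  simp only [Fidem, lagrange, List.map_map, Function.comp_def]

theorem Fidem_mul_of_mem (hsep : SeparatesF t n ℓ κ)
    (hv : v ∈ tableauWeightSpace t κ (leftMul K (genL K t n ℓ κ)) W) :
    Fidem K t n ℓ κ U * v = if U = W then v else 0 := by
  rw [Fidem_eq_prod_lagrange, ← smul_eq_mul,
    list_prod_smul_eq fun k _ => lagrange_smul (Lgen_smul_of_mem hv k)]
  split_ifs with hUW
  · simp only [hUW, lagrange_self, List.map_const', List.prod_replicate, one_pow, one_smul]
  · obtain ⟨k, hk, hne⟩ : ∃ k < n,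
        qint (t : K) (content κ U (k + 1)) ≠ qint (t : K) (content κ W (k + 1)) := by
      by_contra! heq
      exact hUW (StdTableau.eq_of_path_eq
        (IsStdPath.eq_of_qint_eq hsep le_rfl U.isStdPath_path W.isStdPath_path heq))
    have hmem := (Finset.mem_sort (· ≤ ·)).mpr (W.content_mem_contFinset κ hk)
    rw [List.prod_eq_zero (List.mem_map.mpr ⟨⟨k, hk⟩, List.mem_finRange _,
      lagrange_eq_zero (List.mem_map_of_mem hmem) hne⟩), zero_smul]

theorem fres_mul_of_mem (hsep : SeparatesF t n ℓ κ) {e : ℕ} (i : Fin n → ZMod e)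
    (hv : v ∈ tableauWeightSpace t κ (leftMul K (genL K t n ℓ κ)) W) :
    fres K t n ℓ e κ i * v = if resSeq e κ W = i then v else 0 := by
  have := Fintype.ofFinite {U : StdTableau ℓ n // resSeq e κ U = i}
  rw [fres, finsum_eq_sum_of_fintype, Finset.sum_mul]
  simp only [Fidem_mul_of_mem hsep hv]
  split_ifs with hW
  · rw [Finset.sum_eq_single_of_mem ⟨W, hW⟩ (Finset.mem_univ _)
      fun U _ hU => if_neg fun h => hU (Subtype.ext h), if_pos rfl]
  · exact Finset.sum_eq_zero fun U _ => if_neg fun h : U.1 = W => hW (h ▸ U.2)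

theorem intertwiner_mul_fres_mul_of_mem (hsep : SeparatesF t n ℓ κ) {e : ℕ} (i : Fin n → ZMod e)
    (r : Fin (n - 1)) (hv : v ∈ tableauWeightSpace t κ (leftMul K (genL K t n ℓ κ)) U) :
    intertwiner (genL K t n ℓ κ) (genT K t n ℓ κ) r * (fres K t n ℓ e κ i * v) =
      fres K t n ℓ e κ (swapSeq i r) * (intertwiner (genL K t n ℓ κ) (genT K t n ℓ κ) r * v) := by
  rw [fres_mul_of_mem hsep i hv, mul_ite, mul_zero]
  rcases heckeRelations_gen.leftMul.intertwiner_apply_eq_zero_or_mem hsep e r hv with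
    hzero | ⟨U', hres, hmem⟩
  · rw [intertwiner_leftMul] at hzero
    rw [hzero, mul_zero, ite_self]
  · rw [intertwiner_leftMul] at hmem
    rw [fres_mul_of_mem hsep (swapSeq i r) hmem, hres]
    simp only [(swapSeq_injective r).eq_iff]

theorem intertwiner_mul_fres (hsep : SeparatesF t n ℓ κ) {e : ℕ} (i : Fin n → ZMod e)
    (r : Fin (n - 1)) :
    intertwiner (genL K t n ℓ κ) (genT K t n ℓ κ) r * fres K t n ℓ e κ i =
      fres K t n ℓ e κ (swapSeq i r) * intertwiner (genL K t n ℓ κ) (genT K t n ℓ κ) r := by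
  have hspan := heckeRelations_gen.leftMul.iSup_tableauWeightSpace_eq_top hsep
  apply Algebra.lmul_injective (R := K)
  rw [← LinearMap.eqLocus_eq_top, eq_top_iff, ← hspan]
  refine iSup_le fun U v hv => ?_
  simpa [mul_assoc] using intertwiner_mul_fres_mul_of_mem hsep i r hv

end CyclotomicHecke

theorem intertwiner_distinct_residues_general (n ℓ e : ℕ) (κ : ℕ → ℤ) (K : Type*) [Field K]
    (t : Kˣ) (hsep : SeparatesF t n ℓ κ) (i : Fin n → ZMod e) (r : Fin (n - 1)) :
    (Tgen K t n ℓ κ r * Lgen K t n ℓ κ (pL r) -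
        Lgen K t n ℓ κ (pL r) * Tgen K t n ℓ κ r) * fres K t n ℓ e κ i =
      fres K t n ℓ e κ (swapSeq i r) *
        (Tgen K t n ℓ κ r * Lgen K t n ℓ κ (pL r) -
          Lgen K t n ℓ κ (pL r) * Tgen K t n ℓ κ r) := by
  rw [← genT_val, ← genL_val]
  exact intertwiner_mul_fres hsep i r

/-- Lemma L:InterwinderNe: if `i_r ≠ i_{r+1}` then
`(T_r L_r - L_r T_r) f_i = f_{s_r·i} (T_r L_r - L_r T_r)`. -/
theorem intertwiner_distinct_residues (n ℓ e : ℕ) (he : e ≠ 1) (κ : ℕ → ℤ)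
    (K : Type) [Field K] (t : Kˣ) (hsep : SeparatesF t n ℓ κ)
    (i : Fin n → ZMod e) (r : Fin (n - 1)) (h : i (pL r) ≠ i (pR r)) :
    (Tgen K t n ℓ κ r * Lgen K t n ℓ κ (pL r) -
        Lgen K t n ℓ κ (pL r) * Tgen K t n ℓ κ r) * fres K t n ℓ e κ i =
      fres K t n ℓ e κ (swapSeq i r) *
        (Tgen K t n ℓ κ r * Lgen K t n ℓ κ (pL r) -
          Lgen K t n ℓ κ (pL r) * Tgen K t n ℓ κ r) :=
  intertwiner_distinct_residues_general n ℓ e κ K t hsep i r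

end Paper
end
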